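/- For the weight vector w = (0,512,384,74,0,256,72,768,584,456,0,64,320,832,58,56,568,440,111,48,304,108,816,620,492,0,32,96,352,864) ∈ ℝ^30 (the weight vector associated to the string cone of the reduced expression s_1s_2s_1s_3s_4s_3s_2s_3s_1s_2 for Flag_5), the initial ideal init_w(I_5) is generated by binomials but is not a prime ideal. -/

import Mathlib

/-!
Order the monomials of each degree so that smaller weights come first, with ties broken suitably.
Buchberger's algorithm, applied to the quadratic Plücker relations, yields elements of `I5` whose
leading monomial has minimal weight and whose part of minimal weight has at most two terms. Every
monomial can be rewritten modulo these elements into monomials divisible by none of the leading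
ones. A comparison of Hilbert series shows that in each degree there are as many of these as
monomials in Plücker variables with pairwise comparable columns, the semistandard tableaux. The
latter are linearly independent modulo `I5`, because the corresponding products of minors have
distinct diagonal leading monomials. Hence the elements form a Gröbner basis, and their parts of
minimal weight generate the initial ideal, which is therefore binomial. It lies in the square of
the irrelevant ideal and contains the product of the Plücker variables `p₅` and `p₃₄`, so it is
not prime.
-/

open MvPolynomial

/-- The weight of a monomial exponent `u` with respect to a weight vector `w`. -/
noncomputable def wt {N : ℕ} (w : Fin N → ℝ) (u : Fin N →₀ ℕ) : ℝ :=
  ∑ i, w i * (u i : ℝ)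

open Classical in
/-- The initial form of a polynomial `f` with respect to a weight vector `w`:
the sum of the terms whose weight is minimal among the terms of `f`. -/
noncomputable def initialForm {N : ℕ} (w : Fin N → ℝ) (f : MvPolynomial (Fin N) ℚ) :
    MvPolynomial (Fin N) ℚ :=
  ∑ u ∈ f.support, if ∀ v ∈ f.support, wt w u ≤ wt w v then monomial u (coeff u f) else 0

/-- The initial ideal of `I` with respect to a weight vector `w`. -/
noncomputable def initialIdeal {N : ℕ} (w : Fin N → ℝ) (I : Ideal (MvPolynomial (Fin N) ℚ)) :
    Ideal (MvPolynomial (Fin N) ℚ) :=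
  Ideal.span {g | ∃ f ∈ I, f ≠ 0 ∧ g = initialForm w f}

/-- An ideal is binomial if it is generated by polynomials with at most two terms. -/
def IsBinomialIdeal {N : ℕ} (I : Ideal (MvPolynomial (Fin N) ℚ)) : Prop :=
  ∃ S : Set (MvPolynomial (Fin N) ℚ), I = Ideal.span S ∧ ∀ f ∈ S, f.support.card ≤ 2

/-- The Plücker minor: the determinant of the submatrix of the `r × c` matrix of
indeterminates `(x_{i,j})` with row indices `1, …, |J|` and column indices the elements
of `J` in increasing order. -/
noncomputable def pluckerMinor (r c : ℕ) (J : Finset (Fin c)) (h : J.card ≤ r) :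
    MvPolynomial (Fin r × Fin c) ℚ :=
  (Matrix.of fun a b : Fin J.card =>
    MvPolynomial.X (Fin.castLE h a, ((J.orderIsoOfFin rfl b : Fin c)))).det

/-- The 30 nonempty proper subsets of `{1,2,3,4,5}` in the order
`p₁,…,p₅, p₁₂,p₁₃,p₁₄,p₁₅,p₂₃,p₂₄,p₂₅,p₃₄,p₃₅,p₄₅,
p₁₂₃,p₁₂₄,p₁₂₅,p₁₃₄,p₁₃₅,p₁₄₅,p₂₃₄,p₂₃₅,p₂₄₅,p₃₄₅,
p₁₂₃₄,p₁₂₃₅,p₁₂₄₅,p₁₃₄₅,p₂₃₄₅`. -/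
def subsets5 : Fin 30 → Finset (Fin 5) :=
  ![{0}, {1}, {2}, {3}, {4},
    {0, 1}, {0, 2}, {0, 3}, {0, 4}, {1, 2}, {1, 3}, {1, 4}, {2, 3}, {2, 4}, {3, 4},
    {0, 1, 2}, {0, 1, 3}, {0, 1, 4}, {0, 2, 3}, {0, 2, 4}, {0, 3, 4},
    {1, 2, 3}, {1, 2, 4}, {1, 3, 4}, {2, 3, 4},
    {0, 1, 2, 3}, {0, 1, 2, 4}, {0, 1, 3, 4}, {0, 2, 3, 4}, {1, 2, 3, 4}]

lemma subsets5_card : ∀ i : Fin 30, (subsets5 i).card ≤ 4 := by decide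

/-- The map `φ₅` sending each Plücker variable `p_J` to the corresponding minor of the
`4 × 5` matrix of indeterminates. -/
noncomputable def phi5 : MvPolynomial (Fin 30) ℚ →ₐ[ℚ] MvPolynomial (Fin 4 × Fin 5) ℚ :=
  MvPolynomial.aeval fun i => pluckerMinor 4 5 (subsets5 i) (subsets5_card i)

/-- The defining ideal `I₅` of the flag variety `Flag₅` in its Plücker embedding. -/
noncomputable def I5 : Ideal (MvPolynomial (Fin 30) ℚ) := RingHom.ker phi5.toRingHom

open scoped Finset

section RewritingSystems

variable {σ R : Type*} [CommRing R] {r w : σ → ℕ} {I : Ideal (MvPolynomial σ R)}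
  {G : Set ((σ →₀ ℕ) × MvPolynomial σ R)}

/-- A set of rewriting rules for an ideal `I`: the pair `(l, t)` encodes the element
`monomial l 1 + t` of `I`, read as the rule replacing `monomial l 1` by `-t`. Rewriting decreases
the rank given by `r`, never decreases the weight given by `w`, and never increases the degree. -/
structure IsRewritingSystem (r w : σ → ℕ) (I : Ideal (MvPolynomial σ R))
    (G : Set ((σ →₀ ℕ) × MvPolynomial σ R)) : Prop where
  add_mem : ∀ g ∈ G, monomial g.1 1 + g.2 ∈ I
  rank_lt : ∀ g ∈ G, ∀ v ∈ g.2.support, Finsupp.weight r v < Finsupp.weight r g.1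
  weight_le : ∀ g ∈ G, ∀ v ∈ g.2.support, Finsupp.weight w g.1 ≤ Finsupp.weight w v
  degree_le : ∀ g ∈ G, ∀ v ∈ g.2.support, v.degree ≤ g.1.degree

/-- The exponents divisible by no left-hand side of a rule in `G`. -/
def irreducibleExponents (G : Set ((σ →₀ ℕ) × MvPolynomial σ R)) : Set (σ →₀ ℕ) :=
  {u | ∀ g ∈ G, ¬ g.1 ≤ u}

/-- The part of minimal weight of the relation encoded by a rule. -/
noncomputable def lowestForm (w : σ → ℕ) (g : (σ →₀ ℕ) × MvPolynomial σ R) : MvPolynomial σ R :=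
  weightedHomogeneousComponent w (Finsupp.weight w g.1) (monomial g.1 1 + g.2)

/-- The elements of `I` whose weight-`n` component lies in the ideal of lowest forms of `G`. -/
noncomputable def lowestFormSubmodule (w : σ → ℕ) (I : Ideal (MvPolynomial σ R))
    (G : Set ((σ →₀ ℕ) × MvPolynomial σ R)) (n : ℕ) : Submodule R (MvPolynomial σ R) :=
  I.restrictScalars R ⊓
    ((Ideal.span (lowestForm w '' G)).restrictScalars R).comap (weightedHomogeneousComponent w n)

theorem weightedHomogeneousComponent_monomial_mul (e : σ →₀ ℕ) (f : MvPolynomial σ R) (n : ℕ) :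
    weightedHomogeneousComponent w (Finsupp.weight w e + n) (monomial e 1 * f) =
      monomial e 1 * weightedHomogeneousComponent w n f := by
  classical
  ext v
  simp only [coeff_weightedHomogeneousComponent, coeff_monomial_mul', one_mul]
  by_cases hle : e ≤ v
  · obtain ⟨u, rfl⟩ := exists_add_of_le hle
    simp only [hle, if_true, map_add, add_tsub_cancel_left, add_right_inj]
  · simp only [hle, if_false, ite_self]

theorem IsRewritingSystem.weight_le_of_mem_support (hG : IsRewritingSystem r w I G)
    {g : (σ →₀ ℕ) × MvPolynomial σ R} (hg : g ∈ G) {v : σ →₀ ℕ}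
    (hv : v ∈ (monomial g.1 (1 : R) + g.2).support) :
    Finsupp.weight w g.1 ≤ Finsupp.weight w v := by
  classical
  rcases Finset.mem_union.1 (support_add hv) with h | h
  · rw [Finset.mem_singleton.1 (support_monomial_subset h)]
  · exact hG.weight_le g hg v h

theorem IsRewritingSystem.monomial_mul_mem_lowestFormSubmodule (hG : IsRewritingSystem r w I G)
    {g : (σ →₀ ℕ) × MvPolynomial σ R} (hg : g ∈ G) (e : σ →₀ ℕ) {n : ℕ}
    (hn : n ≤ Finsupp.weight w e + Finsupp.weight w g.1) :
    monomial e 1 * (monomial g.1 1 + g.2) ∈ lowestFormSubmodule w I G n := by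
  refine ⟨I.mul_mem_left _ (hG.add_mem g hg), ?_⟩
  change weightedHomogeneousComponent w n _ ∈ Ideal.span (lowestForm w '' G)
  obtain rfl | hlt := hn.eq_or_lt
  · rw [weightedHomogeneousComponent_monomial_mul]
    exact Ideal.mul_mem_left _ _ (Ideal.subset_span (Set.mem_image_of_mem _ hg))
  · rw [weightedHomogeneousComponent_eq_zero']
    · exact zero_mem _
    · intro v hv
      classical
      obtain ⟨a, ha, b, hb, rfl⟩ := Finset.mem_add.1 (support_mul _ _ hv)
      rw [Finset.mem_singleton.1 (support_monomial_subset ha), map_add]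
      have := hG.weight_le_of_mem_support hg hb
      lia

theorem IsRewritingSystem.monomial_mem (hG : IsRewritingSystem r w I G) (n d : ℕ)
    (u : σ →₀ ℕ) (hn : n ≤ Finsupp.weight w u) (hd : u.degree ≤ d) :
    monomial u 1 ∈ lowestFormSubmodule w I G n ⊔
      restrictSupport R {v ∈ irreducibleExponents G | v.degree ≤ d} := by
  induction hk : Finsupp.weight r u using Nat.strong_induction_on generalizing u with
  | _ k ih =>
  subst hk
  by_cases hu : u ∈ irreducibleExponents G
  · exact Submodule.mem_sup_right ((monomial_mem_restrictSupport R).2 (.inl ⟨hu, hd⟩))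
  simp only [irreducibleExponents, Set.mem_ofPred_eq, not_forall, not_not] at hu
  obtain ⟨g, hg, hgu⟩ := hu
  obtain ⟨e, rfl⟩ := exists_add_of_le hgu
  simp only [map_add] at hn hd ih
  have hsplit : monomial (g.1 + e) (1 : R) =
      monomial e 1 * (monomial g.1 1 + g.2) -
        ∑ v ∈ g.2.support, coeff v g.2 • monomial (v + e) 1 := by
    have htail : monomial e 1 * g.2 = ∑ v ∈ g.2.support, coeff v g.2 • monomial (v + e) 1 := by
      conv_lhs => rw [g.2.as_sum, Finset.mul_sum]
      simp [monomial_mul, smul_monomial, add_comm]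
    rw [mul_add, htail, monomial_mul, add_comm e, one_mul, add_sub_cancel_right]
  rw [hsplit]
  refine Submodule.sub_mem _ (Submodule.mem_sup_left
    (hG.monomial_mul_mem_lowestFormSubmodule hg e (by lia)))
    (Submodule.sum_mem _ fun v hv => Submodule.smul_mem _ _ ?_)
  have hrank := hG.rank_lt g hg v hv
  have hweight := hG.weight_le g hg v hv
  have hdegree := hG.degree_le g hg v hv
  exact ih _ (by lia) (v + e) (by rw [map_add]; lia) (by rw [map_add]; lia) (map_add _ _ _)

theorem IsRewritingSystem.restrictSupport_le (hG : IsRewritingSystem r w I G) (d : ℕ) :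
    restrictSupport R {v | v.degree ≤ d} ≤ I.restrictScalars R ⊔
      restrictSupport R {v ∈ irreducibleExponents G | v.degree ≤ d} := by
  rw [restrictSupport_eq_span, Submodule.span_le]
  rintro _ ⟨u, hu, rfl⟩
  exact (sup_le_sup_right inf_le_left _ : lowestFormSubmodule w I G 0 ⊔ _ ≤ _)
    (hG.monomial_mem 0 d u (Nat.zero_le _) hu)

theorem IsRewritingSystem.weightedHomogeneousComponent_mem_span (hG : IsRewritingSystem r w I G)
    (hI : Disjoint (I.restrictScalars R) (restrictSupport R (irreducibleExponents G)))
    {f : MvPolynomial σ R} (hf : f ∈ I) {n : ℕ} (hn : ∀ u ∈ f.support, n ≤ Finsupp.weight w u) :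
    weightedHomogeneousComponent w n f ∈ Ideal.span (lowestForm w '' G) := by
  have hmem : f ∈ lowestFormSubmodule w I G n ⊔ restrictSupport R (irreducibleExponents G) := by
    rw [f.as_sum]
    refine Submodule.sum_mem _ fun u hu => ?_
    rw [← mul_one (coeff u f), ← smul_eq_mul, ← smul_monomial]
    exact Submodule.smul_mem _ _ (sup_le_sup_left (restrictSupport_mono R fun v hv => hv.1) _
      (hG.monomial_mem n _ u (hn u hu) le_rfl))
  obtain ⟨a, ha, b, hb, rfl⟩ := Submodule.mem_sup.1 hmem
  have hb0 : b = 0 := Submodule.disjoint_def.1 hI b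
    (by simpa using Submodule.sub_mem _ (show a + b ∈ I.restrictScalars R from hf) ha.1) hb
  rw [hb0, add_zero]
  exact ha.2

theorem IsRewritingSystem.coeff_lead (hG : IsRewritingSystem r w I G)
    {g : (σ →₀ ℕ) × MvPolynomial σ R} (hg : g ∈ G) : coeff g.1 (monomial g.1 1 + g.2) = 1 := by
  classical
  rw [coeff_add, coeff_monomial, if_pos rfl, add_eq_left, ← notMem_support_iff]
  exact fun h => (hG.rank_lt g hg _ h).false

theorem support_lowestForm_subset [DecidableEq σ] (g : (σ →₀ ℕ) × MvPolynomial σ R) :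
    (lowestForm w g).support ⊆
      insert g.1 {v ∈ g.2.support | Finsupp.weight w v = Finsupp.weight w g.1} := by
  intro v hv
  rw [lowestForm, support_weightedHomogeneousComponent, Finset.mem_filter] at hv
  rcases Finset.mem_union.1 (support_add hv.1) with h | h
  · rw [Finset.mem_singleton.1 (support_monomial_subset h)]
    exact Finset.mem_insert_self _ _
  · exact Finset.mem_insert_of_mem (Finset.mem_filter.2 ⟨h, hv.2⟩)

theorem span_lowestForm_le_pow_idealOfVars {n : ℕ} (hlead : ∀ g ∈ G, n ≤ g.1.degree)
    (htail : ∀ g ∈ G, ∀ v ∈ g.2.support, n ≤ v.degree) :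
    Ideal.span (lowestForm w '' G) ≤ idealOfVars σ R ^ n := by
  classical
  rw [Ideal.span_le]
  rintro _ ⟨g, hg, rfl⟩
  refine (mem_pow_idealOfVars_iff n _).2 fun v hv => ?_
  rcases Finset.mem_insert.1 (support_lowestForm_subset g hv) with rfl | h
  · exact hlead g hg
  · exact htail g hg v (Finset.mem_filter.1 h).1

end RewritingSystems

section InitialIdeals

theorem wt_natCast {N : ℕ} (w : Fin N → ℕ) (u : Fin N →₀ ℕ) :
    wt (fun i => (w i : ℝ)) u = Finsupp.weight w u := by
  simp [wt, Finsupp.weight_apply, Finsupp.sum_fintype, mul_comm]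

theorem initialForm_eq_weightedHomogeneousComponent {N : ℕ} {w : Fin N → ℕ}
    {f : MvPolynomial (Fin N) ℚ} {u : Fin N →₀ ℕ} (hu : u ∈ f.support)
    (hmin : ∀ v ∈ f.support, Finsupp.weight w u ≤ Finsupp.weight w v) :
    initialForm (fun i => (w i : ℝ)) f =
      weightedHomogeneousComponent w (Finsupp.weight w u) f := by
  classical
  have hlowest {v : Fin N →₀ ℕ} (hv : v ∈ f.support) :
      (∀ v' ∈ f.support, wt (fun i => (w i : ℝ)) v ≤ wt (fun i => (w i : ℝ)) v') ↔
        Finsupp.weight w v = Finsupp.weight w u := by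
    simp only [wt_natCast, Nat.cast_le]
    exact ⟨fun h => (h u hu).antisymm (hmin v hv), fun h v' hv' => h ▸ hmin v' hv'⟩
  rw [initialForm, weightedHomogeneousComponent_apply, Finset.sum_filter]
  exact Finset.sum_congr rfl fun v hv => by simp only [hlowest hv]

variable {N : ℕ} {r w : Fin N → ℕ} {I : Ideal (MvPolynomial (Fin N) ℚ)}
  {G : Set ((Fin N →₀ ℕ) × MvPolynomial (Fin N) ℚ)}

theorem IsRewritingSystem.initialForm_eq_lowestForm (hG : IsRewritingSystem r w I G)
    {g : (Fin N →₀ ℕ) × MvPolynomial (Fin N) ℚ} (hg : g ∈ G) :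
    initialForm (fun i => (w i : ℝ)) (monomial g.1 1 + g.2) = lowestForm w g :=
  initialForm_eq_weightedHomogeneousComponent
    (mem_support_iff.2 (by rw [hG.coeff_lead hg]; exact one_ne_zero))
    fun _ hv => hG.weight_le_of_mem_support hg hv

theorem IsRewritingSystem.initialIdeal_eq_span (hG : IsRewritingSystem r w I G)
    (hI : Disjoint (I.restrictScalars ℚ) (restrictSupport ℚ (irreducibleExponents G))) :
    initialIdeal (fun i => (w i : ℝ)) I = Ideal.span (lowestForm w '' G) := by
  apply le_antisymm <;> refine Ideal.span_le.2 ?_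
  · rintro _ ⟨f, hf, hf0, rfl⟩
    obtain ⟨u, hu, hmin⟩ :=
      f.support.exists_min_image (Finsupp.weight w) (support_nonempty.2 hf0)
    rw [initialForm_eq_weightedHomogeneousComponent hu hmin]
    exact hG.weightedHomogeneousComponent_mem_span hI hf hmin
  · rintro _ ⟨g, hg, rfl⟩
    refine Ideal.subset_span
      ⟨_, hG.add_mem g hg, fun h => ?_, (hG.initialForm_eq_lowestForm hg).symm⟩
    simpa [h] using hG.coeff_lead hg

theorem isBinomialIdeal_span_lowestForm
    (h : ∀ g ∈ G, {v ∈ g.2.support | Finsupp.weight w v = Finsupp.weight w g.1}.card ≤ 1) :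
    IsBinomialIdeal (Ideal.span (lowestForm w '' G)) := by
  refine ⟨_, rfl, ?_⟩
  rintro _ ⟨g, hg, rfl⟩
  exact (Finset.card_le_card (support_lowestForm_subset g)).trans
    ((Finset.card_insert_le _ _).trans (Nat.succ_le_succ (h g hg)))

theorem not_isPrime_of_le_pow_idealOfVars {σ R : Type*} [CommRing R] [Nontrivial R]
    {J : Ideal (MvPolynomial σ R)} (hJ : J ≤ idealOfVars σ R ^ 2) {i j : σ}
    (h : X i * X j ∈ J) : ¬ J.IsPrime := by
  intro hprime
  have hX (k : σ) : (X k : MvPolynomial σ R) ∉ J := fun hk => by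
    have := (mem_pow_idealOfVars_iff 2 _).1 (hJ hk) (Finsupp.single k 1) (by simp [support_X])
    simp at this
  exact (hprime.mem_or_mem h).elim (hX i) (hX j)

end InitialIdeals

section HilbertSeries

variable {σ : Type*}

/-- The affine Hilbert series of a set of exponents: its `n`-th coefficient counts the elements
of total degree at most `n`. -/
noncomputable def growthSeries (S : Set (σ →₀ ℕ)) : PowerSeries ℤ :=
  PowerSeries.mk fun n => ({u ∈ S | u.degree ≤ n}.ncard : ℤ)

theorem finite_setOf_mem_degree_le [Finite σ] (S : Set (σ →₀ ℕ)) (n : ℕ) :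
    {u ∈ S | u.degree ≤ n}.Finite :=
  (Finsupp.finite_of_degree_le n).subset fun _ hu => hu.2

theorem growthSeries_eq_add_shift [Finite σ] (S : Set (σ →₀ ℕ)) (x : σ) :
    growthSeries S = growthSeries {u ∈ S | u x = 0} +
      PowerSeries.X * growthSeries {u | Finsupp.single x 1 + u ∈ S} := by
  ext n
  have hsplit : {u ∈ S | u.degree ≤ n} = {u ∈ {u ∈ S | u x = 0} | u.degree ≤ n} ∪
      {u ∈ S | u.degree ≤ n ∧ u x ≠ 0} := by
    ext u; simp only [Set.mem_ofPred_eq, Set.mem_union]; tauto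
  have hdisj : Disjoint {u ∈ {u ∈ S | u x = 0} | u.degree ≤ n}
      {u ∈ S | u.degree ≤ n ∧ u x ≠ 0} :=
    Set.disjoint_left.2 fun u h h' => h'.2.2 h.1.2
  have hfin : {u ∈ S | u.degree ≤ n ∧ u x ≠ 0}.Finite :=
    (finite_setOf_mem_degree_le S n).subset fun u hu => ⟨hu.1, hu.2.1⟩
  have hshift (k : ℕ) : {u ∈ S | u.degree ≤ k + 1 ∧ u x ≠ 0} =
      (Finsupp.single x 1 + ·) '' {u ∈ {u | Finsupp.single x 1 + u ∈ S} | u.degree ≤ k} := by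
    ext u
    simp only [Set.mem_ofPred_eq, Set.mem_image]
    constructor
    · rintro ⟨hu, hdeg, hx⟩
      obtain ⟨v, rfl⟩ := exists_add_of_le (Finsupp.single_le_iff.2 (Nat.one_le_iff_ne_zero.2 hx))
      exact ⟨v, ⟨hu, by simp [map_add] at hdeg; omega⟩, rfl⟩
    · rintro ⟨v, ⟨hv, hdeg⟩, rfl⟩
      exact ⟨hv, by simp [map_add]; omega, by simp⟩
  simp only [growthSeries, map_add, PowerSeries.coeff_mk]
  rw [hsplit, Set.ncard_union_eq hdisj (finite_setOf_mem_degree_le _ n) hfin, Nat.cast_add]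
  congr 1
  cases n with
  | zero =>
    rw [PowerSeries.coeff_zero_X_mul, Nat.cast_eq_zero, Set.ncard_eq_zero hfin]
    refine Set.eq_empty_of_forall_notMem fun u hu => hu.2.2 ?_
    rw [(Finsupp.degree_eq_zero_iff u).1 (Nat.le_zero.1 hu.2.1), Finsupp.zero_apply]
  | succ k =>
    rw [PowerSeries.coeff_succ_X_mul, PowerSeries.coeff_mk, hshift,
      Set.ncard_image_of_injective _ (add_right_injective _)]

variable [DecidableEq σ]

/-- The exponent vector of a monomial written as a list of variables. -/
noncomputable def exponent (m : List σ) : σ →₀ ℕ := Multiset.toFinsupp (m : Multiset σ)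

/-- The exponents of the standard monomials of the monomial ideal generated by the list `L`. -/
def standardExponents (L : List (List σ)) : Set (σ →₀ ℕ) := {u | ∀ m ∈ L, ¬ exponent m ≤ u}

theorem exponent_nil : exponent ([] : List σ) = 0 := by simp [exponent]

theorem exponent_apply (m : List σ) (x : σ) : exponent m x = m.count x := by
  simp [exponent]

theorem exponent_le_iff {m : List σ} {u : σ →₀ ℕ} : exponent m ≤ u ↔ ∀ x, m.count x ≤ u x := by
  simp [Finsupp.le_def, exponent_apply]

theorem exponent_le_exponent {m n : List σ} (h : m.Sublist n) : exponent m ≤ exponent n :=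
  Finsupp.le_def.2 fun x => by simpa only [exponent_apply] using h.count_le x

theorem exponent_le_single_add_iff {m : List σ} {x : σ} {u : σ →₀ ℕ} :
    exponent m ≤ Finsupp.single x 1 + u ↔ exponent (m.erase x) ≤ u := by
  simp only [exponent_le_iff, Finsupp.add_apply, Finsupp.single_apply, List.count_erase, beq_iff_eq]
  refine forall_congr' fun y => ?_
  split_ifs <;> omega

/-- The power series with finitely many coefficients, listed in increasing degree. -/
noncomputable def ofCoeffs (l : List ℤ) : PowerSeries ℤ :=
  l.foldr (fun a p => PowerSeries.C a + PowerSeries.X * p) 0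

/-- The sum of two polynomials given by their lists of coefficients. -/
def addCoeffs : List ℤ → List ℤ → List ℤ
  | [], l => l
  | l, [] => l
  | a :: l, b :: m => (a + b) :: addCoeffs l m

theorem ofCoeffs_cons (a : ℤ) (l : List ℤ) :
    ofCoeffs (a :: l) = PowerSeries.C a + PowerSeries.X * ofCoeffs l := rfl

theorem ofCoeffs_addCoeffs (l m : List ℤ) :
    ofCoeffs (addCoeffs l m) = ofCoeffs l + ofCoeffs m := by
  induction l, m using addCoeffs.induct with
  | case1 l => simp [addCoeffs, ofCoeffs]
  | case2 l h => cases l <;> simp [addCoeffs, ofCoeffs]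
  | case3 a l b m ih => rw [addCoeffs]; simp only [ofCoeffs_cons, ih, map_add]; ring

theorem ofCoeffs_map_neg (l : List ℤ) : ofCoeffs (l.map Neg.neg) = -ofCoeffs l := by
  induction l with
  | nil => simp [ofCoeffs]
  | cons a l ih => rw [List.map_cons, ofCoeffs_cons, ofCoeffs_cons, ih, map_neg]; ring

theorem ofCoeffs_eq_zero {l : List ℤ} (h : ∀ a ∈ l, a = 0) : ofCoeffs l = 0 := by
  induction l with
  | nil => rfl
  | cons a l ih =>
    rw [List.forall_mem_cons] at h
    rw [ofCoeffs_cons, h.1, ih h.2, map_zero, mul_zero, add_zero]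

/-- The recursion computing `hilbertNumerator L`; it splits off the powers of one variable at a
time and makes at most `n` nested splittings. -/
def hilbertNumeratorAux : ℕ → List (List σ) → List ℤ
  | 0, _ => []
  | _ + 1, [] => [1]
  | _ + 1, [] :: _ => []
  | n + 1, L@((x :: _) :: _) =>
    let free := L.filter fun m => x ∉ m
    let quot := (L.filter fun m => x ∈ m).map fun m => m.erase x
    let B := hilbertNumeratorAux n free
    let A := hilbertNumeratorAux n (quot ++ free.filter fun m => ∀ q ∈ quot, ¬ q.isSublist m)
    addCoeffs B (0 :: addCoeffs A (B.map Neg.neg))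

/-- The coefficients of the numerator of the Hilbert series of the quotient by the monomial ideal
generated by `L`, the denominator being that of the polynomial ring. -/
def hilbertNumerator (L : List (List σ)) : List ℤ :=
  hilbertNumeratorAux ((L.map List.length).sum + 1) L

theorem standardExponents_eq_empty {L : List (List σ)} (h : [] ∈ L) : standardExponents L = ∅ :=
  Set.eq_empty_of_forall_notMem fun u hu => hu [] h (by simp [exponent_nil])

theorem growthSeries_standardExponents [Finite σ] (L : List (List σ)) (x : σ) :
    growthSeries (standardExponents L) =
      growthSeries (standardExponents (L.filter fun m => x ∉ m)) -
        PowerSeries.X * growthSeries (standardExponents (L.filter fun m => x ∉ m)) +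
      PowerSeries.X * growthSeries {u | Finsupp.single x 1 + u ∈ standardExponents L} := by
  set free := L.filter fun m => x ∉ m with hfree
  have hzero : {u ∈ standardExponents L | u x = 0} = {u ∈ standardExponents free | u x = 0} := by
    ext u
    simp only [standardExponents, Set.mem_ofPred_eq, hfree, List.mem_filter, decide_eq_true_eq,
      and_congr_left_iff]
    refine fun hux => ⟨fun h m hm => h m hm.1, fun h m hm hmu => h m ⟨hm, fun hxm => ?_⟩ hmu⟩
    have := exponent_le_iff.1 hmu x
    rw [hux, Nat.le_zero, List.count_eq_zero] at this
    exact this hxm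
  have hshift : {u | Finsupp.single x 1 + u ∈ standardExponents free} = standardExponents free := by
    ext u
    refine forall₂_congr fun m hm => ?_
    rw [exponent_le_single_add_iff, List.erase_of_not_mem (by simpa using (List.mem_filter.1 hm).2)]
  have hfreeSplit := growthSeries_eq_add_shift (standardExponents free) x
  rw [hshift, ← hzero] at hfreeSplit
  linear_combination growthSeries_eq_add_shift (standardExponents L) x - hfreeSplit

theorem setOf_single_add_mem_standardExponents (L : List (List σ)) (x : σ) :
    {u | Finsupp.single x 1 + u ∈ standardExponents L} =
      standardExponents (((L.filter fun m => x ∈ m).map fun m => m.erase x) ++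
        (L.filter fun m => x ∉ m).filter fun m =>
          ∀ q ∈ (L.filter fun m => x ∈ m).map fun m => m.erase x, ¬ q.isSublist m) := by
  set quot := (L.filter fun m => x ∈ m).map fun m => m.erase x
  ext u
  simp only [standardExponents, Set.mem_ofPred_eq, exponent_le_single_add_iff, List.mem_append]
  constructor
  · rintro h m (hm | hm)
    · obtain ⟨m, hmL, rfl⟩ := List.mem_map.1 hm
      exact h m (List.mem_filter.1 hmL).1
    · have hfree := List.mem_filter.1 (List.mem_filter.1 hm).1
      simpa [List.erase_of_not_mem (by simpa using hfree.2 : x ∉ m)] using h m hfree.1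
  · intro h m hm
    by_cases hx : x ∈ m
    · exact h _ (.inl (List.mem_map_of_mem (List.mem_filter.2 ⟨hm, by simpa using hx⟩)))
    rw [List.erase_of_not_mem hx]
    by_cases hdvd : ∀ q ∈ quot, ¬ q.isSublist m
    · exact h m (.inr (List.mem_filter.2 ⟨List.mem_filter.2 ⟨hm, by simpa using hx⟩,
        decide_eq_true hdvd⟩))
    · push Not at hdvd
      obtain ⟨q, hq, hqm⟩ := hdvd
      exact fun hmu => h q (.inl hq)
        ((exponent_le_exponent (List.isSublist_iff_sublist.1 hqm)).trans hmu)

theorem sum_length_quot_add_sum_length_free_le (L : List (List σ)) (x : σ) :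
    ((((L.filter fun m => x ∈ m).map fun m => m.erase x)).map List.length).sum +
      ((L.filter fun m => x ∉ m).map List.length).sum ≤ (L.map List.length).sum := by
  induction L with
  | nil => simp
  | cons m L ih =>
    by_cases hx : x ∈ m
    · have := List.length_erase_le (a := x) (l := m)
      simp only [List.filter_cons, hx, decide_true, if_true, not_true, decide_false,
        Bool.false_eq_true, if_false, List.map_cons, List.sum_cons] at ih ⊢
      lia
    · simp only [List.filter_cons, hx, decide_false, Bool.false_eq_true, if_false,
        not_false_eq_true,
        decide_true, if_true, List.map_cons, List.sum_cons] at ih ⊢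
      lia

theorem sum_length_quot_add_sum_length_free_lt (x : σ) (m : List σ) (L : List (List σ)) :
    (((((x :: m) :: L).filter fun m => x ∈ m).map fun m => m.erase x).map List.length).sum +
      ((((x :: m) :: L).filter fun m => x ∉ m).map List.length).sum <
        (((x :: m) :: L).map List.length).sum := by
  have := sum_length_quot_add_sum_length_free_le L x
  simp only [List.filter_cons, List.mem_cons_self, decide_true, if_true, not_true, decide_false,
    Bool.false_eq_true, if_false, List.map_cons, List.sum_cons, List.erase_cons_head,
    List.length_cons]
  lia

theorem growthSeries_eq_mul_aux [Finite σ] (n : ℕ) (L : List (List σ))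
    (hn : (L.map List.length).sum < n) :
    growthSeries (standardExponents L) =
      ofCoeffs (hilbertNumeratorAux n L) * growthSeries (Set.univ : Set (σ →₀ ℕ)) := by
  induction n, L using hilbertNumeratorAux.induct with
  | case1 L => exact absurd hn (Nat.not_lt_zero _)
  | case2 n => simp [hilbertNumeratorAux, ofCoeffs, standardExponents]
  | case3 n L =>
    rw [standardExponents_eq_empty List.mem_cons_self]
    simp [hilbertNumeratorAux, ofCoeffs, growthSeries, PowerSeries.ext_iff]
  | case4 n x m L free quot ihFree ihQuot =>
    have hlt := sum_length_quot_add_sum_length_free_lt x m L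
    have hle : ((free.filter fun m => ∀ q ∈ quot, ¬ q.isSublist m).map List.length).sum ≤
        (free.map List.length).sum :=
      (List.filter_sublist.map List.length).sum_le_sum fun _ _ => Nat.zero_le _
    rw [growthSeries_standardExponents _ x, setOf_single_add_mem_standardExponents,
      ihFree (by lia), ihQuot (by rw [List.map_append, List.sum_append]; lia),
      hilbertNumeratorAux, ofCoeffs_addCoeffs, ofCoeffs_cons, ofCoeffs_addCoeffs,
      ofCoeffs_map_neg, map_zero]
    ring

theorem growthSeries_eq_mul [Finite σ] (L : List (List σ)) :
    growthSeries (standardExponents L) =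
      ofCoeffs (hilbertNumerator L) * growthSeries (Set.univ : Set (σ →₀ ℕ)) :=
  growthSeries_eq_mul_aux _ L (Nat.lt_succ_self _)

theorem ncard_standardExponents_eq [Finite σ] {L M : List (List σ)}
    (h : ∀ a ∈ addCoeffs (hilbertNumerator L) ((hilbertNumerator M).map Neg.neg), a = 0) (n : ℕ) :
    {u ∈ standardExponents L | u.degree ≤ n}.ncard =
      {u ∈ standardExponents M | u.degree ≤ n}.ncard := by
  have hnum := ofCoeffs_eq_zero h
  rw [ofCoeffs_addCoeffs, ofCoeffs_map_neg, add_neg_eq_zero] at hnum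
  have hseries : growthSeries (standardExponents L) = growthSeries (standardExponents M) := by
    rw [growthSeries_eq_mul, growthSeries_eq_mul, hnum]
  simpa [growthSeries] using congrArg (PowerSeries.coeff n) hseries

end HilbertSeries

section Counting

theorem disjoint_of_finrank_le {K M : Type*} [DivisionRing K] [AddCommGroup M] [Module K M]
    {p S T : Submodule K M} [FiniteDimensional K T] (hpS : Disjoint p S) (hST : S ≤ p ⊔ T)
    (hcard : Module.finrank K T ≤ Module.finrank K S) : Disjoint p T := by
  have hker (U : Submodule K M) : LinearMap.ker (p.mkQ.domRestrict U) = ⊥ ↔ Disjoint p U := by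
    rw [LinearMap.ker_domRestrict, Submodule.ker_mkQ, ← Submodule.disjoint_iff_comap_eq_bot,
      disjoint_comm]
  have hmap : S.map p.mkQ ≤ T.map p.mkQ := by
    rw [Submodule.map_le_iff_le_comap, Submodule.comap_map_mkQ]
    exact hST
  have hS : Module.finrank K (S.map p.mkQ) = Module.finrank K S := by
    rw [← LinearMap.range_domRestrict]
    exact LinearMap.finrank_range_of_inj (LinearMap.ker_eq_bot.1 ((hker S).2 hpS))
  have hT := (p.mkQ.domRestrict T).finrank_range_add_finrank_ker
  rw [LinearMap.range_domRestrict] at hT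
  have := Submodule.finrank_mono hmap
  rw [← hker, ← Submodule.finrank_eq_zero]
  lia

theorem finrank_restrictSupport {σ K : Type*} [CommRing K] [Nontrivial K] (s : Set (σ →₀ ℕ)) :
    Module.finrank K (restrictSupport K s) = s.ncard :=
  Module.finrank_eq_nat_card_basis (basisRestrictSupport K s)

variable {σ K : Type*} [Finite σ] [Field K] {r w : σ → ℕ} {I : Ideal (MvPolynomial σ K)}
  {G : Set ((σ →₀ ℕ) × MvPolynomial σ K)}

theorem IsRewritingSystem.disjoint_restrictSupport (hG : IsRewritingSystem r w I G)
    {S : Set (σ →₀ ℕ)} (hS : Disjoint (I.restrictScalars K) (restrictSupport K S))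
    (hcard : ∀ d, {u ∈ irreducibleExponents G | u.degree ≤ d}.ncard ≤
      {u ∈ S | u.degree ≤ d}.ncard) :
    Disjoint (I.restrictScalars K) (restrictSupport K (irreducibleExponents G)) := by
  refine Submodule.disjoint_def.2 fun f hfI hf => ?_
  have hfin : FiniteDimensional K
      (restrictSupport K {u ∈ irreducibleExponents G | u.degree ≤ f.totalDegree}) :=
    have := (finite_setOf_mem_degree_le (irreducibleExponents G) f.totalDegree).to_subtype
    .of_basis (basisRestrictSupport K _)
  have hdisj := disjoint_of_finrank_le
    (hS.mono_right (restrictSupport_mono K (Set.sep_subset _ fun u => u.degree ≤ f.totalDegree)))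
    ((restrictSupport_mono K fun u (hu : u ∈ {u ∈ S | u.degree ≤ f.totalDegree}) => hu.2).trans
      (hG.restrictSupport_le f.totalDegree))
    (by simpa only [finrank_restrictSupport] using hcard f.totalDegree)
  refine Submodule.disjoint_def.1 hdisj f hfI (mem_restrictSupport_iff K |>.2 fun u hu => ⟨?_, ?_⟩)
  · exact (mem_restrictSupport_iff K).1 hf hu
  · exact (Finsupp.degree_apply ..).trans_le (le_totalDegree hu)

end Counting

section LeadingTerms

theorem disjoint_ker_aeval_restrictSupport {σ τ K : Type*} [CommRing K] [IsDomain K]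
    (m : MonomialOrder τ) {y : σ → MvPolynomial τ K} (hy : ∀ i, y i ≠ 0) {S : Set (σ →₀ ℕ)}
    (hS : S.InjOn (Finsupp.linearCombination ℕ fun i => m.degree (y i))) :
    Disjoint ((RingHom.ker (aeval (R := K) y)).restrictScalars K) (restrictSupport K S) := by
  refine Submodule.disjoint_def.2 fun f hfI hf => ?_
  by_contra hf0
  have hmonomial (u : σ →₀ ℕ) : u.prod (fun i k => y i ^ k) ≠ 0 :=
    Finset.prod_ne_zero_iff.2 fun i _ => pow_ne_zero _ (hy i)
  have hdegree (u : σ →₀ ℕ) : m.degree (u.prod fun i k => y i ^ k) =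
      Finsupp.linearCombination ℕ (fun i => m.degree (y i)) u := by
    rw [Finsupp.prod, m.degree_prod fun i _ => pow_ne_zero _ (hy i)]
    simp only [m.degree_pow, Finsupp.linearCombination_apply, Finsupp.sum]
  obtain ⟨u, hu, hmax⟩ := f.support.exists_max_image
    (fun u => m.toSyn (Finsupp.linearCombination ℕ (fun i => m.degree (y i)) u))
    (support_nonempty.2 hf0)
  have hcoeff : coeff (Finsupp.linearCombination ℕ (fun i => m.degree (y i)) u) (aeval y f) =
      coeff u f * m.leadingCoeff (u.prod fun i k => y i ^ k) := by
    rw [aeval_def, eval₂_eq, coeff_sum, Finset.sum_eq_single_of_mem u hu]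
    · rw [MvPolynomial.algebraMap_eq, coeff_C_mul, ← hdegree]
      rfl
    · intro v hv hvu
      rw [MvPolynomial.algebraMap_eq, coeff_C_mul, m.coeff_eq_zero_of_lt, mul_zero]
      refine ((hmax v hv).lt_of_ne fun h => hvu ?_).trans_eq' (congrArg m.toSyn (hdegree v).symm)
      rw [mem_restrictSupport_iff] at hf
      exact hS (hf hv) (hf hu) (m.toSyn.injective h)
  rw [RingHom.mem_ker.1 hfI, coeff_zero] at hcoeff
  exact mul_ne_zero (mem_support_iff.1 hu) (m.leadingCoeff_ne_zero_iff.2 (hmonomial u)) hcoeff.symm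

end LeadingTerms

section Chains

variable {σ X : Type*} {L : σ → Set X}

theorem linearCombination_indicator_apply_ne_zero_iff (u : σ →₀ ℕ) (x : X) :
    Finsupp.linearCombination ℕ (fun i => (L i).indicator (1 : X → ℕ)) u x ≠ 0 ↔
      ∃ i ∈ u.support, x ∈ L i := by
  simp [Finsupp.linearCombination_apply, Finsupp.sum, Finset.sum_apply]

theorem exists_mem_support_eq_setOf {u : σ →₀ ℕ} (hu : u ≠ 0)
    (hchain : IsChain (· ⊆ ·) (L '' u.support)) :
    ∃ k ∈ u.support,
      L k = {x | Finsupp.linearCombination ℕ (fun i => (L i).indicator (1 : X → ℕ)) u x ≠ 0} := by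
  obtain ⟨k, hk, hmax⟩ := u.support.finite_toSet.exists_maximalFor L _
    (Finset.coe_nonempty.2 (Finsupp.support_nonempty_iff.2 hu))
  refine ⟨k, hk, Set.ext fun x => ?_⟩
  rw [Set.mem_ofPred_eq, linearCombination_indicator_apply_ne_zero_iff]
  refine ⟨fun hx => ⟨k, hk, hx⟩, fun ⟨i, hi, hx⟩ => ?_⟩
  rcases hchain.total (Set.mem_image_of_mem L hi) (Set.mem_image_of_mem L hk) with h | h
  · exact h hx
  · exact hmax hi h hx

theorem injOn_linearCombination_indicator (hinj : L.Injective) (hne : ∀ i, (L i).Nonempty) :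
    Set.InjOn (Finsupp.linearCombination ℕ fun i => (L i).indicator (1 : X → ℕ))
      {u | IsChain (· ⊆ ·) (L '' u.support)} := by
  intro u hu v hv huv
  induction hn : u.degree generalizing u v with
  | zero =>
    rw [Finsupp.degree_eq_zero_iff] at hn
    subst hn
    by_contra hv0
    obtain ⟨i, hi⟩ := Finsupp.support_nonempty_iff.2 (Ne.symm hv0)
    obtain ⟨x, hx⟩ := hne i
    refine (linearCombination_indicator_apply_ne_zero_iff v x).2 ⟨i, hi, hx⟩ ?_
    rw [← huv, map_zero, Pi.zero_apply]
  | succ n ih =>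
    have hu0 : u ≠ 0 := by
      rintro rfl
      simp at hn
    obtain ⟨k, hk, hLk⟩ := exists_mem_support_eq_setOf hu0 hu
    have hv0 : v ≠ 0 := by
      rintro rfl
      obtain ⟨x, hx⟩ := hne k
      rw [hLk, huv] at hx
      simp at hx
    obtain ⟨l, hl, hLl⟩ := exists_mem_support_eq_setOf hv0 hv
    obtain rfl : k = l := hinj (by rw [hLk, hLl, huv])
    have hle {w : σ →₀ ℕ} (hw : k ∈ w.support) : Finsupp.single k 1 ≤ w :=
      Finsupp.single_le_iff.2 (Nat.one_le_iff_ne_zero.2 (Finsupp.mem_support_iff.1 hw))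
    obtain ⟨u, rfl⟩ := exists_add_of_le (hle hk)
    obtain ⟨v, rfl⟩ := exists_add_of_le (hle hl)
    have hchain {w : σ →₀ ℕ} (hw : IsChain (· ⊆ ·) (L '' (Finsupp.single k 1 + w).support)) :
        IsChain (· ⊆ ·) (L '' w.support) :=
      hw.mono (Set.image_mono (Finset.coe_subset.2 (Finsupp.support_mono le_add_self)))
    simp only [map_add, add_right_inj, Finsupp.degree_single] at huv hn
    rw [ih (hchain hu) (hchain hv) huv (by lia)]

end Chains

section DiagonalTerms

open scoped MonomialOrder

theorem degree_eq_of_forall_le {τ R : Type*} [CommSemiring R] {m : MonomialOrder τ}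
    {f : MvPolynomial τ R} {d : τ →₀ ℕ} (hd : coeff d f ≠ 0) (hle : ∀ e ∈ f.support, e ≼[m] d) :
    m.degree f = d :=
  m.toSyn.injective ((m.degree_le_iff.2 hle).antisymm (m.le_degree (mem_support_iff.2 hd)))

/-- The lexicographic monomial order on the entries of a matrix, read row by row. -/
noncomputable def rowLex (r c : ℕ) : MonomialOrder (Fin r × Fin c) :=
  (MonomialOrder.lex : MonomialOrder (Fin r ×ₗ Fin c))

variable {r c k : ℕ} {f : Fin k → Fin r} {g : Fin k → Fin c}

theorem rowLex_lt_iff {d e : Fin r × Fin c →₀ ℕ} : d ≺[rowLex r c] e ↔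
    ∃ p, (∀ q, toLex q < toLex p → d q = e q) ∧ d p < e p :=
  Iff.rfl

theorem sum_single_perm_rowLex_lt (hf : StrictMono f) (hg : StrictMono g) {π : Equiv.Perm (Fin k)}
    (hπ : π ≠ 1) :
    (∑ i, Finsupp.single (f (π i), g i) 1) ≺[rowLex r c] ∑ i, Finsupp.single (f i, g i) 1 := by
  have hmoved : ∃ i, π⁻¹ i ≠ i := by
    by_contra! h
    exact hπ (inv_eq_one.1 (Equiv.ext h))
  obtain ⟨a, ha, hmin⟩ := WellFounded.has_min wellFounded_lt {i | π⁻¹ i ≠ i} hmoved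
  have hfix (b : Fin k) (hb : b < a) : π⁻¹ b = b := not_not.1 fun h => hmin b h hb
  have hlt : a < π⁻¹ a := by
    refine lt_of_le_of_ne (le_of_not_gt fun h => ha ?_) (Ne.symm ha)
    exact π⁻¹.injective (hfix _ h)
  have hreindex : ∑ i, Finsupp.single (f (π i), g i) 1 =
      ∑ i, Finsupp.single (f i, g (π⁻¹ i)) 1 :=
    Fintype.sum_equiv π _ _ fun i => by simp
  rw [hreindex, rowLex_lt_iff]
  refine ⟨(f a, g a), fun q hq => ?_, ?_⟩
  · simp only [Finsupp.finsetSum_apply]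
    refine Finset.sum_congr rfl fun b _ => ?_
    rcases lt_or_ge b a with hb | hb
    · rw [hfix b hb]
    · rw [Finsupp.single_eq_of_ne, Finsupp.single_eq_of_ne]
      · rintro rfl
        simp only [Prod.Lex.toLex_lt_toLex, hf.lt_iff_lt, hb.not_gt, hf.injective.eq_iff,
          false_or] at hq
        simp [hq.1] at hq
      · rintro rfl
        simp only [Prod.Lex.toLex_lt_toLex, hf.lt_iff_lt, hb.not_gt, hf.injective.eq_iff,
          false_or, hg.lt_iff_lt] at hq
        exact hlt.not_gt (hq.1 ▸ hq.2)
  · simp only [Finsupp.finsetSum_apply]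
    have hzero (b : Fin k) : Finsupp.single (f b, g (π⁻¹ b)) 1 (f a, g a) = 0 := by
      refine Finsupp.single_eq_of_ne fun h => ?_
      rw [Prod.mk.injEq, hf.injective.eq_iff, hg.injective.eq_iff] at h
      exact ha (h.1 ▸ h.2.symm)
    simp only [hzero, Finset.sum_const_zero]
    refine Finset.sum_pos' (fun _ _ => Nat.zero_le _) ⟨a, Finset.mem_univ a, ?_⟩
    simp

theorem coeff_det_X {R : Type*} [CommRing R] (d : Fin r × Fin c →₀ ℕ) :
    coeff d (Matrix.of fun a b => (X (f a, g b) : MvPolynomial (Fin r × Fin c) R)).det =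
      ∑ π : Equiv.Perm (Fin k),
        if ∑ i, Finsupp.single (f (π i), g i) 1 = d then ((π.sign : ℤ) : R) else 0 := by
  classical
  rw [Matrix.det_apply', coeff_sum]
  refine Finset.sum_congr rfl fun π _ => ?_
  simp only [Matrix.of_apply, X, ← monomial_sum_one, ← map_intCast (C : R →+* _), coeff_C_mul,
    coeff_monomial, mul_ite, mul_one, mul_zero]

theorem coeff_det_X_diagonal {R : Type*} [CommRing R] (hf : StrictMono f) (hg : StrictMono g) :
    coeff (∑ i, Finsupp.single (f i, g i) 1)
      (Matrix.of fun a b => (X (f a, g b) : MvPolynomial (Fin r × Fin c) R)).det = 1 := by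
  rw [coeff_det_X, Finset.sum_eq_single_of_mem 1 (Finset.mem_univ _)]
  · simp
  · exact fun π _ hπ => if_neg fun h => (sum_single_perm_rowLex_lt hf hg hπ).ne (by rw [h])

theorem degree_det_X {R : Type*} [CommRing R] [Nontrivial R] (hf : StrictMono f)
    (hg : StrictMono g) :
    (rowLex r c).degree
      (Matrix.of fun a b => (X (f a, g b) : MvPolynomial (Fin r × Fin c) R)).det =
        ∑ i, Finsupp.single (f i, g i) 1 := by
  refine degree_eq_of_forall_le ((coeff_det_X_diagonal hf hg).trans_ne one_ne_zero) fun e he => ?_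
  rw [mem_support_iff, coeff_det_X] at he
  obtain ⟨π, -, hπ⟩ := Finset.exists_ne_zero_of_sum_ne_zero he
  obtain rfl := (ite_ne_right_iff.1 hπ).1
  obtain rfl | h := eq_or_ne π 1
  · exact le_rfl
  · exact (sum_single_perm_rowLex_lt hf hg h).le

end DiagonalTerms

section PluckerRelations

variable {R κ : Type*} [CommRing R]

open Matrix in
theorem sum_det_submatrix_succAbove_mul_det_insertNth (A : Matrix ℕ κ R) {m k : ℕ} (hk : k < m)
    (J : Fin (m + 1) → κ) (K : Fin k → κ) (p : Fin (m + 1) → Fin (k + 1)) :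
    ∑ j, (-1) ^ (j + p j : ℕ) * (A.submatrix Fin.val fun a : Fin m => J (j.succAbove a)).det *
      (A.submatrix Fin.val ((p j).insertNth (J j) K)).det = 0 := by
  have hrow (a : Fin (k + 1)) : ∑ j : Fin (m + 1), (-1) ^ (j : ℕ) * A a (J j) *
      (A.submatrix Fin.val fun b : Fin m => J (j.succAbove b)).det = 0 := by
    let B : Matrix (Fin (m + 1)) (Fin (m + 1)) R :=
      Matrix.of (Fin.cons (fun j => A a (J j)) fun b : Fin m => fun j => A b (J j))
    have hB : B.det = 0 := det_zero_of_row_eq (Fin.succ_ne_zero ⟨a, by lia⟩).symm rfl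
    rw [← hB, det_succ_row_zero]
    rfl
  have hcolumn (j : Fin (m + 1)) : (A.submatrix Fin.val ((p j).insertNth (J j) K)).det =
      ∑ a : Fin (k + 1), (-1) ^ (a + p j : ℕ) * A a (J j) *
        (A.submatrix (fun b => (a.succAbove b : ℕ)) K).det := by
    rw [det_succ_column _ (p j)]
    refine Finset.sum_congr rfl fun a _ => ?_
    congr 2
    · simp
    · ext b c
      simp
  have hsign (n : ℕ) : (-1 : R) ^ n * (-1) ^ n = 1 := by rw [← mul_pow]; simp
  calc _ = ∑ j : Fin (m + 1), ∑ a : Fin (k + 1), (-1) ^ (a : ℕ) *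
          (A.submatrix (fun b => (a.succAbove b : ℕ)) K).det * ((-1) ^ (j : ℕ) * A a (J j) *
            (A.submatrix Fin.val fun b : Fin m => J (j.succAbove b)).det) := by
        refine Finset.sum_congr rfl fun j _ => ?_
        rw [hcolumn, Finset.mul_sum]
        refine Finset.sum_congr rfl fun a _ => ?_
        linear_combination (exp := 1) (-1) ^ (j : ℕ) * (-1) ^ (a : ℕ) * A a (J j) *
          (A.submatrix Fin.val fun b : Fin m => J (j.succAbove b)).det *
          (A.submatrix (fun b => (a.succAbove b : ℕ)) K).det * hsign (p j)
    _ = 0 := by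
        rw [Finset.sum_comm]
        exact Finset.sum_eq_zero fun a _ => by rw [← Finset.mul_sum, hrow, mul_zero]

variable [LinearOrder κ]

theorem lt_card_filter_iff (S : Finset κ) {P : κ → Prop} [DecidablePred P] (hP : Antitone P)
    (a : Fin #S) : a < #{k ∈ S | P k} ↔ P (S.orderEmbOfFin rfl a) := by
  classical
  set e := S.orderEmbOfFin rfl
  constructor
  · intro h
    contrapose! h
    calc #{k ∈ S | P k} ≤ #((Finset.Iio a).map e.toEmbedding) := by
          refine Finset.card_le_card fun k hk => ?_
          obtain ⟨hkS, hkP⟩ := Finset.mem_filter.1 hk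
          obtain ⟨b, rfl⟩ : k ∈ Set.range e := by rwa [S.range_orderEmbOfFin rfl]
          refine Finset.mem_map_of_mem _ (Finset.mem_Iio.2 (lt_of_not_ge fun hab => h ?_))
          exact hP (e.monotone hab) hkP
      _ = a := by rw [Finset.card_map, Fin.card_Iio]
  · intro h
    calc (a : ℕ) < #((Finset.Iic a).map e.toEmbedding) := by
          rw [Finset.card_map, Fin.card_Iic]
          exact Nat.lt_succ_self _
      _ ≤ #{k ∈ S | P k} := by
          refine Finset.card_le_card fun k hk => ?_
          obtain ⟨b, hb, rfl⟩ := Finset.mem_map.1 hk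
          exact Finset.mem_filter.2
            ⟨S.orderEmbOfFin_mem rfl b, hP (e.monotone (Finset.mem_Iic.1 hb)) h⟩

/-- The minor of `A` on its first `#J` rows and the columns in `J`. -/
def topMinor (A : Matrix ℕ κ R) (J : Finset κ) : R :=
  (A.submatrix Fin.val (J.orderEmbOfFin rfl)).det

theorem topMinor_eq_det (A : Matrix ℕ κ R) {J : Finset κ} {n : ℕ} (hn : #J = n) {f : Fin n → κ}
    (hmem : ∀ a, f a ∈ J) (hf : StrictMono f) : topMinor A J = (A.submatrix Fin.val f).det := by
  subst hn
  rw [topMinor, ← Finset.orderEmbOfFin_unique rfl hmem hf]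

theorem topMinor_erase (A : Matrix ℕ κ R) (J : Finset κ) {m : ℕ} (hm : #J = m + 1)
    (j : Fin (m + 1)) : topMinor A (J.erase (J.orderEmbOfFin hm j)) =
      (A.submatrix Fin.val fun a => J.orderEmbOfFin hm (j.succAbove a)).det := by
  refine topMinor_eq_det A ?_ (fun a => Finset.mem_erase.2 ⟨?_, J.orderEmbOfFin_mem hm _⟩)
    ((J.orderEmbOfFin hm).strictMono.comp (Fin.strictMono_succAbove j))
  · rw [Finset.card_erase_of_mem (J.orderEmbOfFin_mem hm j), hm, Nat.add_sub_cancel]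
  · exact (J.orderEmbOfFin hm).injective.ne (Fin.succAbove_ne j a)

theorem topMinor_insert (A : Matrix ℕ κ R) (K : Finset κ) {x : κ} (hx : x ∉ K) {p : Fin (#K + 1)}
    (hp : (p : ℕ) = #{y ∈ K | y < x}) : topMinor A (insert x K) =
      (A.submatrix Fin.val (p.insertNth x (K.orderEmbOfFin rfl))).det := by
  have hlt (a : Fin #K) : a.castSucc < p ↔ K.orderEmbOfFin rfl a < x := by
    rw [Fin.lt_def, hp]
    exact lt_card_filter_iff K (fun _ _ hab hb => hab.trans_lt hb) a
  refine topMinor_eq_det A (Finset.card_insert_of_notMem hx) ?_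
    ((Fin.strictMono_insertNth_iff _ _ _).2
      ⟨(K.orderEmbOfFin rfl).strictMono, fun a => (hlt a).1, fun a ha => ?_⟩)
  · rw [Fin.forall_iff_succAbove p]
    simp
  · refine (le_of_not_gt fun h => ha.not_gt ((hlt a).2 h)).lt_of_ne fun h => hx ?_
    exact h ▸ K.orderEmbOfFin_mem rfl a

theorem det_insertNth_orderEmbOfFin_eq_zero (A : Matrix ℕ κ R) (K : Finset κ) {x : κ} (hx : x ∈ K)
    (p : Fin (#K + 1)) : (A.submatrix Fin.val (p.insertNth x (K.orderEmbOfFin rfl))).det = 0 := by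
  obtain ⟨a, rfl⟩ : x ∈ Set.range (K.orderEmbOfFin rfl) := by rwa [K.range_orderEmbOfFin rfl]
  exact Matrix.det_zero_of_column_eq (Fin.succAbove_ne p a) fun b => by simp

theorem sum_topMinor_erase_mul_topMinor_insert (A : Matrix ℕ κ R) {J K : Finset κ}
    (h : #K + 2 ≤ #J) :
    ∑ x ∈ J \ K, (-1) ^ (#{y ∈ J | y < x} + #{y ∈ K | y < x}) *
      topMinor A (J.erase x) * topMinor A (insert x K) = 0 := by
  obtain ⟨m, hm⟩ : ∃ m, #J = m + 1 := ⟨#J - 1, by lia⟩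
  set e := J.orderEmbOfFin hm
  let p (j : Fin (m + 1)) : Fin (#K + 1) :=
    ⟨#{y ∈ K | y < e j}, Nat.lt_succ_of_le (Finset.card_filter_le _ _)⟩
  have hindex (j : Fin (m + 1)) : #{y ∈ J | y < e j} = j := by
    calc #{y ∈ J | y < e j} = #{y ∈ Finset.univ.map e.toEmbedding | y < e j} := by
          rw [J.map_orderEmbOfFin_univ hm]
      _ = #(Finset.Iio j) := by
          rw [Finset.filter_map, Finset.card_map]
          congr 1
          ext a
          simp
      _ = j := Fin.card_Iio j
  have hsum : J \ K = ({j | e j ∉ K} : Finset _).map e.toEmbedding := by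
    conv_lhs => rw [← J.map_orderEmbOfFin_univ hm]
    simp only [Finset.sdiff_eq_filter, Finset.filter_map]
    rfl
  calc _ = ∑ j with e j ∉ K, (-1) ^ (j + p j : ℕ) *
          topMinor A (J.erase (e j)) * topMinor A (insert (e j) K) := by
        simp only [hsum, Finset.sum_map, RelEmbedding.coe_toEmbedding, hindex, p]
    _ = ∑ j, (-1) ^ (j + p j : ℕ) * (A.submatrix Fin.val fun a : Fin m => e (j.succAbove a)).det *
          (A.submatrix Fin.val ((p j).insertNth (e j) (K.orderEmbOfFin rfl))).det := by
        rw [Finset.sum_filter]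
        refine Finset.sum_congr rfl fun j _ => ?_
        split_ifs with hj
        · rw [det_insertNth_orderEmbOfFin_eq_zero A K hj, mul_zero]
        · rw [topMinor_erase A J hm, topMinor_insert A K hj (p := p j) rfl]
    _ = 0 := sum_det_submatrix_succAbove_mul_det_insertNth A (by lia) _ _ _

end PluckerRelations

section ColumnOrder

variable {r c : ℕ}

/-- The order on the columns of semistandard tableaux: `S` precedes `T` when, up to every column
index, `S` has at most as many elements as `T`. -/
def ColumnLE (S T : Finset (Fin c)) : Prop := ∀ j, #{k ∈ S | k ≤ j} ≤ #{k ∈ T | k ≤ j}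

instance (S T : Finset (Fin c)) : Decidable (ColumnLE S T) :=
  inferInstanceAs (Decidable (∀ _, _))

theorem ColumnLE.mem_of_forall_lt {S T : Finset (Fin c)} (h : ColumnLE S T) {j : Fin c}
    (heq : ∀ k < j, k ∈ S ↔ k ∈ T) (hj : j ∈ S) : j ∈ T := by
  by_contra hjT
  refine (h j).not_gt (Finset.card_lt_card ((Finset.ssubset_iff_of_subset fun k hk => ?_).2
    ⟨j, Finset.mem_filter.2 ⟨hj, le_rfl⟩, fun hj' => hjT (Finset.mem_filter.1 hj').1⟩))
  obtain ⟨hkT, hkj⟩ := Finset.mem_filter.1 hk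
  have hlt : k < j := hkj.lt_of_ne (ne_of_mem_of_not_mem hkT hjT)
  exact Finset.mem_filter.2 ⟨(heq k hlt).2 hkT, hkj⟩

theorem ColumnLE.antisymm {S T : Finset (Fin c)} (hST : ColumnLE S T) (hTS : ColumnLE T S) :
    S = T := by
  ext j
  induction j using WellFoundedLT.induction with
  | ind j ih =>
    exact ⟨hST.mem_of_forall_lt ih, hTS.mem_of_forall_lt fun k hk => (ih k hk).symm⟩

/-- The region strictly below the graph of the function counting the elements of `S` up to a
given column, cut off at height `r`. -/
def countRegion (r : ℕ) (S : Finset (Fin c)) : Set (Fin r × Fin c) :=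
  {p | p.1 < #{k ∈ S | k ≤ p.2}}

theorem countRegion_subset_iff {S T : Finset (Fin c)} (hS : #S ≤ r) :
    countRegion r S ⊆ countRegion r T ↔ ColumnLE S T := by
  refine ⟨fun h j => le_of_not_gt fun hlt => ?_, fun h p hp => hp.trans_le (h p.2)⟩
  have hmem : ((⟨#{k ∈ T | k ≤ j},
      hlt.trans_le ((Finset.card_filter_le _ _).trans hS)⟩ : Fin r), j) ∈ countRegion r S := hlt
  exact lt_irrefl #{k ∈ T | k ≤ j} (h hmem)

theorem countRegion_nonempty {S : Finset (Fin c)} (hS : #S ≤ r) (hne : S.Nonempty) :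
    (countRegion r S).Nonempty := by
  obtain ⟨j, hj⟩ := hne
  exact ⟨(⟨0, (Finset.card_pos.2 ⟨j, hj⟩).trans_le hS⟩, j),
    Finset.card_pos.2 ⟨j, Finset.mem_filter.2 ⟨hj, le_rfl⟩⟩⟩

/-- The partial sums along the rows of a matrix of exponents. -/
noncomputable def rowPartialSums (r c : ℕ) : (Fin r × Fin c →₀ ℕ) →ₗ[ℕ] (Fin r × Fin c → ℕ) :=
  LinearMap.pi fun p => ∑ j ∈ Finset.Iic p.2, Finsupp.lapply (p.1, j)

theorem degree_pluckerMinor (J : Finset (Fin c)) (h : #J ≤ r) :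
    (rowLex r c).degree (pluckerMinor r c J h) =
      ∑ a : Fin #J, Finsupp.single (Fin.castLE h a, (J.orderIsoOfFin rfl a : Fin c)) 1 :=
  degree_det_X (Fin.strictMono_castLE h)
    ((Subtype.strictMono_coe _).comp (J.orderIsoOfFin rfl).strictMono)

theorem pluckerMinor_ne_zero (J : Finset (Fin c)) (h : #J ≤ r) : pluckerMinor r c J h ≠ 0 := by
  have hcoeff := coeff_det_X_diagonal (R := ℚ) (Fin.strictMono_castLE h)
    ((Subtype.strictMono_coe _).comp (J.orderIsoOfFin rfl).strictMono)
  rintro h0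
  exact one_ne_zero (hcoeff.symm.trans ((congrArg _ h0).trans (coeff_zero _)))

theorem rowPartialSums_degree_pluckerMinor (J : Finset (Fin c)) (h : #J ≤ r) :
    rowPartialSums r c ((rowLex r c).degree (pluckerMinor r c J h)) =
      (countRegion r J).indicator 1 := by
  classical
  rw [degree_pluckerMinor]
  ext ⟨a, j⟩
  have hterm (b : Fin #J) : rowPartialSums r c
      (Finsupp.single (Fin.castLE h b, (J.orderIsoOfFin rfl b : Fin c)) 1) (a, j) =
        if Fin.castLE h b = a ∧ (J.orderIsoOfFin rfl b : Fin c) ≤ j then 1 else 0 := by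
    simp [rowPartialSums, Finsupp.single_apply, ite_and, eq_comm]
  have hcount (b : Fin #J) : (J.orderIsoOfFin rfl b : Fin c) ≤ j ↔ b < #{k ∈ J | k ≤ j} :=
    (lt_card_filter_iff J (fun _ _ hab hb => hab.trans hb) b).symm
  simp only [map_sum, Finset.sum_apply, hterm, hcount]
  rw [Set.indicator_apply]
  by_cases ha : (a : ℕ) < #J
  · obtain ⟨b, rfl⟩ : ∃ b, Fin.castLE h b = a := ⟨⟨a, ha⟩, rfl⟩
    simp [countRegion, (Fin.castLE_injective h).eq_iff, ite_and]
  · have hmem : (a, j) ∉ countRegion r J := fun hlt =>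
      ha (hlt.trans_le (Finset.card_filter_le _ _))
    rw [if_neg hmem]
    refine Finset.sum_eq_zero fun b _ => if_neg fun hb => ha ?_
    exact hb.1 ▸ b.2

/-- The `r × c` matrix of indeterminates, extended by zero rows. -/
noncomputable def genericMatrix (r c : ℕ) : Matrix ℕ (Fin c) (MvPolynomial (Fin r × Fin c) ℚ) :=
  Matrix.of fun a j => if h : a < r then X (⟨a, h⟩, j) else 0

theorem pluckerMinor_eq_topMinor (J : Finset (Fin c)) (h : #J ≤ r) :
    pluckerMinor r c J h = topMinor (genericMatrix r c) J := by
  refine congrArg Matrix.det (Matrix.ext fun a b => ?_)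
  simp only [Matrix.of_apply, Matrix.submatrix_apply, genericMatrix, dif_pos (a.2.trans_le h)]
  rfl

theorem disjoint_ker_aeval_pluckerMinor {σ : Type*} {S : σ → Finset (Fin c)}
    (hcard : ∀ i, #(S i) ≤ r) (hne : ∀ i, (S i).Nonempty) (hinj : S.Injective)
    {E : Set (σ →₀ ℕ)}
    (hE : ∀ u ∈ E, ∀ i ∈ u.support, ∀ j ∈ u.support,
      ColumnLE (S i) (S j) ∨ ColumnLE (S j) (S i)) :
    Disjoint ((RingHom.ker (aeval (R := ℚ) fun i =>
      pluckerMinor r c (S i) (hcard i))).restrictScalars ℚ) (restrictSupport ℚ E) := by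
  refine disjoint_ker_aeval_restrictSupport (rowLex r c)
    (fun i => pluckerMinor_ne_zero (S i) (hcard i)) (Set.InjOn.of_comp (g := rowPartialSums r c) ?_)
  have hregion : (fun i => countRegion r (S i)).Injective := fun i j h =>
    hinj (((countRegion_subset_iff (hcard i)).1 h.subset).antisymm
      ((countRegion_subset_iff (hcard j)).1 h.superset))
  have hmain := injOn_linearCombination_indicator hregion
    fun i => countRegion_nonempty (hcard i) (hne i)
  have hcomp : (rowPartialSums r c ∘ Finsupp.linearCombination ℕ
      fun i => (rowLex r c).degree (pluckerMinor r c (S i) (hcard i))) =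
      Finsupp.linearCombination ℕ fun i => (countRegion r (S i)).indicator 1 := by
    ext1 u
    simp only [Function.comp_apply, Finsupp.linearCombination_apply, map_finsuppSum, map_smul,
      rowPartialSums_degree_pluckerMinor]
  rw [hcomp]
  refine hmain.mono fun u hu => ?_
  rintro _ ⟨i, hi, rfl⟩ _ ⟨j, hj, rfl⟩ -
  exact (hE u hu i hi j hj).imp (countRegion_subset_iff (hcard i)).2
    (countRegion_subset_iff (hcard j)).2

end ColumnOrder

section SparsePolynomials

/-- Polynomials with integer coefficients as lists of terms; the monomial in a term is the sorted
list of its variables, with repetitions. -/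
abbrev SparsePoly (σ : Type*) := List (ℤ × List σ)

/-- The polynomial `lead + tail` with the monomial `lead` marked. -/
structure MarkedPoly (σ : Type*) where
  /-- The marked monomial. -/
  lead : List σ
  /-- The sum of the other terms. -/
  tail : SparsePoly σ

section Evaluation

variable {σ A : Type*} [CommRing A]

/-- The value of a polynomial at a point. -/
def SparsePoly.eval (y : σ → A) (p : SparsePoly σ) : A :=
  (p.map fun t => (t.1 : A) * (t.2.map y).prod).sum

/-- The marked polynomial `g` is zero at the point `y`. -/
def MarkedPoly.VanishesAt (y : σ → A) (g : MarkedPoly σ) : Prop :=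
  (g.lead.map y).prod + g.tail.eval y = 0

@[simp]
theorem SparsePoly.eval_nil (y : σ → A) : SparsePoly.eval y [] = 0 := rfl

@[simp]
theorem SparsePoly.eval_cons (y : σ → A) (t : ℤ × List σ) (p : SparsePoly σ) :
    SparsePoly.eval y (t :: p) = t.1 * (t.2.map y).prod + SparsePoly.eval y p := by
  simp [SparsePoly.eval]

theorem SparsePoly.eval_append (y : σ → A) (p q : SparsePoly σ) :
    SparsePoly.eval y (p ++ q) = SparsePoly.eval y p + SparsePoly.eval y q := by
  simp [SparsePoly.eval]

variable [LE σ] [DecidableLE σ]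

/-- The product of two monomials. -/
def mulMonomial (m n : List σ) : List σ := m.foldr (List.orderedInsert (· ≤ ·)) n

theorem prod_map_mulMonomial (y : σ → A) (m n : List σ) :
    ((mulMonomial m n).map y).prod = (m.map y).prod * (n.map y).prod := by
  induction m with
  | nil => simp [mulMonomial]
  | cons x m ih =>
    have hperm : (mulMonomial (x :: m) n).Perm (x :: mulMonomial m n) :=
      List.perm_orderedInsert _ _ _
    rw [(hperm.map y).prod_eq, List.map_cons, List.prod_cons, ih, List.map_cons, List.prod_cons,
      mul_assoc]

end Evaluation

variable {σ : Type*} [DecidableEq σ]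

/-- Adds the term `c * m` to a polynomial, dropping it if its coefficient becomes zero. -/
def addTerm (c : ℤ) (m : List σ) : SparsePoly σ → SparsePoly σ
  | [] => [(c, m)]
  | (d, n) :: p =>
    if m = n then (if c + d = 0 then p else (c + d, n) :: p) else (d, n) :: addTerm c m p

/-- Divides a polynomial by the coefficient of a term of maximal rank, which becomes the marked
one; fails if this is not possible over the integers. -/
def mark (rank : List σ → ℕ) (p : SparsePoly σ) : Option (MarkedPoly σ) :=
  (p.argmax fun t => rank t.2).bind fun t =>
    if t.1 ≠ 0 ∧ ∀ s ∈ p, t.1 ∣ s.1 then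
      some ⟨t.2, (p.erase t).map fun s => (s.1 / t.1, s.2)⟩
    else none

section Reduction

variable [LE σ] [DecidableLE σ]

/-- The polynomial `p + c * m * q`. -/
def addMul (c : ℤ) (m : List σ) (q p : SparsePoly σ) : SparsePoly σ :=
  q.foldl (fun p t => addTerm (c * t.1) (mulMonomial m t.2) p) p

/-- The remainder of `todo + done` on division by `G`, where no term of `done` is divisible by a
marked monomial of `G`. The first argument bounds the number of division steps. -/
def normalForm (G : List (MarkedPoly σ)) : ℕ → SparsePoly σ → SparsePoly σ → SparsePoly σ
  | 0, todo, done => todo ++ done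
  | _ + 1, [], done => done
  | n + 1, (c, m) :: todo, done =>
    match G.find? fun g => g.lead.isSublist m with
    | none => normalForm G n todo (addTerm c m done)
    | some g => normalForm G n (addMul (-c) (m.diff g.lead) g.tail todo) done

/-- Adds to `G` the remainder of `p` on division by `G`, if it is not zero. Stopping after `100`
division steps could only leave the remainder unreduced. -/
def adjoin (rank : List σ → ℕ) (G : List (MarkedPoly σ)) (p : SparsePoly σ) :
    List (MarkedPoly σ) :=
  match mark rank (normalForm G 100 p []) with
  | none => G
  | some g => g :: G

/-- The S-polynomial of two marked polynomials. -/
def sPolynomial (f g : MarkedPoly σ) : SparsePoly σ :=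
  addMul (-1) (f.lead.diff g.lead) g.tail (addMul 1 (g.lead.diff f.lead) f.tail [])

/-- Adds to `G` the remainder of an S-polynomial. New polynomials are added at the head, so the
pair `ij` refers to positions counted from the end of `G`, which do not change. -/
def adjoinSPolynomial (rank : List σ → ℕ) (G : List (MarkedPoly σ)) (ij : ℕ × ℕ) :
    List (MarkedPoly σ) :=
  match G[G.length - 1 - ij.1]?, G[G.length - 1 - ij.2]? with
  | some f, some g => adjoin rank G (sPolynomial f g)
  | _, _ => G

end Reduction

section Soundness

variable {A : Type*} [CommRing A] {y : σ → A}

theorem eval_addTerm (c : ℤ) (m : List σ) (p : SparsePoly σ) :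
    (addTerm c m p).eval y = c * (m.map y).prod + p.eval y := by
  induction p with
  | nil => simp [addTerm]
  | cons t p ih =>
    obtain ⟨d, n⟩ := t
    rw [addTerm]
    split_ifs with hmn hcd
    · have hcd' : (c : A) + d = 0 := by exact_mod_cast congrArg (Int.cast : ℤ → A) hcd
      rw [SparsePoly.eval_cons, hmn]
      linear_combination -(n.map y).prod * hcd'
    · simp only [SparsePoly.eval_cons, hmn, Int.cast_add]
      ring
    · simp only [SparsePoly.eval_cons, ih]
      ring

theorem MarkedPoly.vanishesAt_of_mark_eq_some [NoZeroDivisors A] [CharZero A]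
    {rank : List σ → ℕ} {p : SparsePoly σ} (hp : p.eval y = 0) {g : MarkedPoly σ}
    (hg : mark rank p = some g) : g.VanishesAt y := by
  obtain ⟨t, ht, hg⟩ := Option.bind_eq_some_iff.1 hg
  split_ifs at hg with hdvd
  obtain ⟨ht0, hdvd⟩ := hdvd
  obtain rfl := Option.some.inj hg
  have hdiv (q : SparsePoly σ) (hq : ∀ s ∈ q, t.1 ∣ s.1) :
      t.1 * SparsePoly.eval y (q.map fun s => (s.1 / t.1, s.2)) = q.eval y := by
    induction q with
    | nil => simp
    | cons s q ih =>
      rw [List.forall_mem_cons] at hq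
      have hs : (t.1 : A) * (s.1 / t.1 : ℤ) = s.1 := by
        exact_mod_cast congrArg (Int.cast : ℤ → A) (Int.mul_ediv_cancel' hq.1)
      rw [List.map_cons, SparsePoly.eval_cons, SparsePoly.eval_cons, ← ih hq.2]
      linear_combination (s.2.map y).prod * hs
  have hperm : SparsePoly.eval y p = t.1 * (t.2.map y).prod + SparsePoly.eval y (p.erase t) := by
    rw [← SparsePoly.eval_cons]
    exact ((List.perm_cons_erase (List.argmax_mem ht)).map _).sum_eq
  refine (mul_eq_zero.1 ?_).resolve_left (Int.cast_ne_zero.2 ht0 : (t.1 : A) ≠ 0)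
  rw [mul_add, hdiv _ fun s hs => hdvd s (List.mem_of_mem_erase hs), ← hperm, hp]

variable [LE σ] [DecidableLE σ]

theorem eval_addMul (c : ℤ) (m : List σ) (q p : SparsePoly σ) :
    (addMul c m q p).eval y = c * (m.map y).prod * q.eval y + p.eval y := by
  induction q generalizing p with
  | nil => simp [addMul]
  | cons t q ih =>
    rw [addMul, List.foldl_cons, ← addMul, ih, eval_addTerm, prod_map_mulMonomial,
      SparsePoly.eval_cons, Int.cast_mul]
    ring

theorem eval_normalForm {G : List (MarkedPoly σ)} (hG : ∀ g ∈ G, g.VanishesAt y) (n : ℕ)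
    (todo done : SparsePoly σ) :
    (normalForm G n todo done).eval y = todo.eval y + done.eval y := by
  induction n, todo, done using normalForm.induct G with
  | case1 todo done => exact SparsePoly.eval_append y todo done
  | case2 _ done => simp [normalForm]
  | case3 n c m todo done hfind ih =>
    rw [normalForm, hfind, ih, eval_addTerm, SparsePoly.eval_cons]
    ring
  | case4 n c m todo done g hfind ih =>
    have hprod : (m.map y).prod = (g.lead.map y).prod * ((m.diff g.lead).map y).prod := by
      have hsub : g.lead.Sublist m :=
        List.isSublist_iff_sublist.1
          (List.find?_some (p := fun g : MarkedPoly σ => g.lead.isSublist m) hfind)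
      rw [← List.prod_append, ← List.map_append]
      exact ((List.subperm_append_diff_self_of_count_le fun x _ =>
        hsub.count_le x).map y).prod_eq.symm
    have hg : (g.lead.map y).prod + g.tail.eval y = 0 := hG g (List.mem_of_find?_eq_some hfind)
    rw [normalForm, hfind, ih, eval_addMul, SparsePoly.eval_cons, hprod, Int.cast_neg]
    linear_combination -c * ((m.diff g.lead).map y).prod * hg

theorem eval_sPolynomial {f g : MarkedPoly σ} (hf : f.VanishesAt y) (hg : g.VanishesAt y) :
    (sPolynomial f g).eval y = 0 := by
  have hlcm : (f.lead ++ g.lead.diff f.lead).Perm (g.lead ++ f.lead.diff g.lead) := by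
    rw [← Multiset.coe_eq_coe, ← Multiset.coe_add, ← Multiset.coe_add, ← Multiset.coe_sub,
      ← Multiset.coe_sub, add_comm, ← Multiset.union_def, Multiset.union_comm, Multiset.union_def,
      add_comm]
  have hprod := (hlcm.map y).prod_eq
  simp only [List.map_append, List.prod_append] at hprod
  rw [sPolynomial, eval_addMul, eval_addMul, SparsePoly.eval_nil, Int.cast_neg, Int.cast_one]
  unfold MarkedPoly.VanishesAt at hf hg
  linear_combination ((g.lead.diff f.lead).map y).prod * hf -
    ((f.lead.diff g.lead).map y).prod * hg - hprod

variable [NoZeroDivisors A] [CharZero A] {rank : List σ → ℕ} {G : List (MarkedPoly σ)}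

theorem vanishesAt_of_mem_adjoin (hG : ∀ g ∈ G, g.VanishesAt y) {p : SparsePoly σ}
    (hp : p.eval y = 0) : ∀ g ∈ adjoin rank G p, g.VanishesAt y := by
  have hzero : (normalForm G 100 p []).eval y = 0 := by
    rw [eval_normalForm hG, hp, SparsePoly.eval_nil, add_zero]
  rw [adjoin]
  split
  case _ => exact hG
  case _ g hg => exact List.forall_mem_cons.2 ⟨MarkedPoly.vanishesAt_of_mark_eq_some hzero hg, hG⟩

theorem vanishesAt_of_mem_adjoinSPolynomial (hG : ∀ g ∈ G, g.VanishesAt y) (ij : ℕ × ℕ) :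
    ∀ g ∈ adjoinSPolynomial rank G ij, g.VanishesAt y := by
  rw [adjoinSPolynomial]
  split
  case _ f g hf hg =>
    exact vanishesAt_of_mem_adjoin hG
      (eval_sPolynomial (hG f (List.mem_of_getElem? hf)) (hG g (List.mem_of_getElem? hg)))
  case _ => exact hG

end Soundness

end SparsePolynomials

section RewritingRules

variable {σ R A : Type*} [CommRing R] [CommRing A] [Algebra R A]

/-- The weight of a monomial. -/
def weightOf (w : σ → ℕ) (m : List σ) : ℕ := (m.map w).sum

/-- The conditions on a marked polynomial under which it can serve as a rewriting rule for the
rank `r`, has its marked monomial among those of least weight, and has a binomial initial form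
that lies in the square of the irrelevant ideal. -/
def MarkedPoly.IsAdmissible (r w : σ → ℕ) (g : MarkedPoly σ) : Prop :=
  (∀ t ∈ g.tail, weightOf r t.2 < weightOf r g.lead ∧ weightOf w g.lead ≤ weightOf w t.2 ∧
    t.2.length = g.lead.length) ∧
  2 ≤ g.lead.length ∧ g.tail.countP (fun t => weightOf w t.2 = weightOf w g.lead) ≤ 1

instance (r w : σ → ℕ) (g : MarkedPoly σ) : Decidable (g.IsAdmissible r w) :=
  inferInstanceAs (Decidable (_ ∧ _))

theorem SparsePoly.aeval_eval_X (y : σ → A) (p : SparsePoly σ) :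
    aeval y (p.eval (X : σ → MvPolynomial σ R)) = p.eval y := by
  simp [SparsePoly.eval, map_list_sum, map_list_prod, Function.comp_def]

variable [DecidableEq σ]

theorem exponent_cons (x : σ) (m : List σ) :
    exponent (x :: m) = Finsupp.single x 1 + exponent m := by
  ext y
  simp [exponent_apply, List.count_cons, Finsupp.single_apply, add_comm]

theorem prod_map_X (m : List σ) :
    (m.map X).prod = monomial (exponent m) (1 : R) := by
  induction m with
  | nil => simp [exponent_nil]
  | cons x m ih => rw [List.map_cons, List.prod_cons, ih, exponent_cons, X, monomial_mul, one_mul]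

theorem degree_exponent (m : List σ) : (exponent m).degree = m.length := by
  induction m with
  | nil => simp [exponent_nil]
  | cons x m ih =>
    rw [exponent_cons, map_add, ih, Finsupp.degree_single, List.length_cons, add_comm]

theorem weight_exponent (w : σ → ℕ) (m : List σ) :
    Finsupp.weight w (exponent m) = weightOf w m := by
  induction m with
  | nil => simp [exponent_nil, weightOf]
  | cons x m ih => simp [exponent_cons, ih, weightOf, Finsupp.weight_single]

theorem SparsePoly.exists_of_mem_support_eval_X {p : SparsePoly σ} {v : σ →₀ ℕ}
    (hv : v ∈ (p.eval (X : σ → MvPolynomial σ R)).support) : ∃ t ∈ p, exponent t.2 = v := by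
  induction p with
  | nil => simp at hv
  | cons t p ih =>
    rw [SparsePoly.eval_cons, prod_map_X, ← map_intCast (C : R →+* MvPolynomial σ R),
      C_mul_monomial] at hv
    rcases Finset.mem_union.1 (support_add hv) with hv | hv
    · exact ⟨t, List.mem_cons_self, (Finset.mem_singleton.1 (support_monomial_subset hv)).symm⟩
    · obtain ⟨s, hs, rfl⟩ := ih hv
      exact ⟨s, List.mem_cons_of_mem t hs, rfl⟩

theorem SparsePoly.card_filter_support_eval_X_le (w : σ → ℕ) (n : ℕ) (p : SparsePoly σ) :
    #{v ∈ (p.eval (X : σ → MvPolynomial σ R)).support | Finsupp.weight w v = n} ≤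
      p.countP fun t => weightOf w t.2 = n := by
  have hsub : {v ∈ (p.eval (X : σ → MvPolynomial σ R)).support | Finsupp.weight w v = n} ⊆
      ((p.filter fun t => weightOf w t.2 = n).map fun t => exponent t.2).toFinset := by
    intro v hv
    obtain ⟨hv, hw⟩ := Finset.mem_filter.1 hv
    obtain ⟨t, ht, rfl⟩ := exists_of_mem_support_eval_X hv
    rw [weight_exponent] at hw
    exact List.mem_toFinset.2 (List.mem_map.2 ⟨t, List.mem_filter.2 ⟨ht, decide_eq_true hw⟩, rfl⟩)
  calc _ ≤ _ := Finset.card_le_card hsub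
    _ ≤ _ := List.toFinset_card_le _
    _ = _ := by rw [List.length_map, List.countP_eq_length_filter]

/-- The marked polynomial `g` as a rewriting rule. -/
noncomputable def MarkedPoly.rule (R : Type*) [CommRing R] (g : MarkedPoly σ) :
    (σ →₀ ℕ) × MvPolynomial σ R :=
  (exponent g.lead, g.tail.eval X)

theorem irreducibleExponents_rule (G : List (MarkedPoly σ)) :
    irreducibleExponents (MarkedPoly.rule R '' {g | g ∈ G}) =
      standardExponents (G.map MarkedPoly.lead) := by
  ext u
  simp [irreducibleExponents, standardExponents, MarkedPoly.rule]

theorem MarkedPoly.VanishesAt.rule_mem_ker {y : σ → A} {g : MarkedPoly σ} (hg : g.VanishesAt y) :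
    monomial (g.rule R).1 1 + (g.rule R).2 ∈ RingHom.ker (aeval (R := R) y) := by
  rw [RingHom.mem_ker, MarkedPoly.rule, ← prod_map_X, map_add, SparsePoly.aeval_eval_X,
    map_list_prod, List.map_map]
  simpa [MarkedPoly.VanishesAt, Function.comp_def] using hg

theorem isRewritingSystem_rule {y : σ → A} {r w : σ → ℕ} {G : List (MarkedPoly σ)}
    (hzero : ∀ g ∈ G, g.VanishesAt y) (hadm : ∀ g ∈ G, g.IsAdmissible r w) :
    IsRewritingSystem r w (RingHom.ker (aeval (R := R) y)) (MarkedPoly.rule R '' {g | g ∈ G}) where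
  add_mem := by
    rintro _ ⟨g, hg, rfl⟩
    exact (hzero g hg).rule_mem_ker
  rank_lt := by
    rintro _ ⟨g, hg, rfl⟩ v hv
    obtain ⟨t, ht, rfl⟩ := SparsePoly.exists_of_mem_support_eval_X hv
    simpa only [MarkedPoly.rule, weight_exponent] using ((hadm g hg).1 t ht).1
  weight_le := by
    rintro _ ⟨g, hg, rfl⟩ v hv
    obtain ⟨t, ht, rfl⟩ := SparsePoly.exists_of_mem_support_eval_X hv
    simpa only [MarkedPoly.rule, weight_exponent] using ((hadm g hg).1 t ht).2.1
  degree_le := by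
    rintro _ ⟨g, hg, rfl⟩ v hv
    obtain ⟨t, ht, rfl⟩ := SparsePoly.exists_of_mem_support_eval_X hv
    simpa only [MarkedPoly.rule, degree_exponent] using ((hadm g hg).1 t ht).2.2.le

theorem isBinomialIdeal_span_lowestForm_rule {N : ℕ} {r w : Fin N → ℕ}
    {G : List (MarkedPoly (Fin N))} (hadm : ∀ g ∈ G, g.IsAdmissible r w) :
    IsBinomialIdeal (Ideal.span (lowestForm w '' (MarkedPoly.rule ℚ '' {g | g ∈ G}))) := by
  refine isBinomialIdeal_span_lowestForm ?_
  rintro _ ⟨g, hg, rfl⟩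
  simp only [MarkedPoly.rule, weight_exponent]
  exact (SparsePoly.card_filter_support_eval_X_le w _ g.tail).trans (hadm g hg).2.2

theorem span_lowestForm_rule_le {r w : σ → ℕ} {G : List (MarkedPoly σ)}
    (hadm : ∀ g ∈ G, g.IsAdmissible r w) :
    Ideal.span (lowestForm w '' (MarkedPoly.rule R '' {g | g ∈ G})) ≤ idealOfVars σ R ^ 2 := by
  refine span_lowestForm_le_pow_idealOfVars ?_ ?_
  · rintro _ ⟨g, hg, rfl⟩
    exact (hadm g hg).2.1.trans_eq (degree_exponent g.lead).symm
  · rintro _ ⟨g, hg, rfl⟩ v hv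
    obtain ⟨t, ht, rfl⟩ := SparsePoly.exists_of_mem_support_eval_X hv
    rw [degree_exponent, ((hadm g hg).1 t ht).2.2]
    exact (hadm g hg).2.1

theorem MarkedPoly.lowestForm_rule_of_forall_ne {w : σ → ℕ} {g : MarkedPoly σ}
    (h : ∀ t ∈ g.tail, weightOf w t.2 ≠ weightOf w g.lead) :
    lowestForm w (g.rule R) = (g.lead.map X).prod := by
  have htail : weightedHomogeneousComponent w (weightOf w g.lead)
      (g.tail.eval (X : σ → MvPolynomial σ R)) = 0 := by
    refine weightedHomogeneousComponent_eq_zero' _ _ fun v hv => ?_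
    obtain ⟨t, ht, rfl⟩ := SparsePoly.exists_of_mem_support_eval_X hv
    rw [weight_exponent]
    exact h t ht
  rw [lowestForm, MarkedPoly.rule, weight_exponent, map_add, htail, add_zero, prod_map_X]
  rw [weightedHomogeneousComponent_of_mem
    (isWeightedHomogeneous_monomial w _ _ (weight_exponent w g.lead)), if_pos rfl]

end RewritingRules

section FlagVariety

/-- The weight vector of the string cone. -/
def flagWeights : Fin 30 → ℕ :=
  ![0, 512, 384, 74, 0, 256, 72, 768, 584, 456, 0, 64, 320, 832, 58, 56, 568, 440, 111, 48, 304,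
    108, 816, 620, 492, 0, 32, 96, 352, 864]

/-- The weights of the monomial order behind the Gröbner basis: among monomials of the same degree,
a smaller weight gives a larger rank, and the corrections by `1` order the two terms of each
binomial initial form. -/
def flagRanks (i : Fin 30) : ℕ :=
  (if 20 ≤ i ∧ i ≤ 22 then 8649 else 8650) - 10 * flagWeights i

/-- The subsets of the set of columns. -/
def columnSets : List (Finset (Fin 5)) := (List.finRange 5).sublists.map List.toFinset

/-- The index of the Plücker variable `p_S`, for `S` nonempty and proper. -/
def pluckerIndex (S : Finset (Fin 5)) : Fin 30 := Fin.ofNat 30 ((List.ofFn subsets5).idxOf S)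

/-- The Plücker relation exchanging one element of `J` against `K`. -/
def pluckerRelation (J K : Finset (Fin 5)) : SparsePoly (Fin 30) :=
  ((List.finRange 5).filter (· ∈ J \ K)).map fun x =>
    ((-1) ^ (#{y ∈ J | y < x} + #{y ∈ K | y < x}),
      mulMonomial [pluckerIndex (J.erase x)] [pluckerIndex (insert x K)])

/-- The quadratic Plücker relations. -/
def pluckerRelations : List (SparsePoly (Fin 30)) :=
  columnSets.flatMap fun J =>
    (columnSets.filter fun K => #K + 2 ≤ #J).map fun K => pluckerRelation J K

/-- A basis of the span of the quadratic Plücker relations, found by division with remainder. -/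
def flagQuadrics : List (MarkedPoly (Fin 30)) :=
  pluckerRelations.reverse.foldl (adjoin (weightOf flagRanks)) []

/-- The pairs, in the order of treatment, whose S-polynomials have nonzero remainders in
Buchberger's algorithm. -/
def criticalPairs : List (ℕ × ℕ) :=
  [(4, 2), (6, 3), (7, 0), (10, 8), (11, 1), (11, 2), (13, 2), (14, 12), (20, 19), (21, 19),
   (22, 21), (24, 2), (24, 14), (25, 21), (26, 16), (28, 10), (31, 24), (31, 29), (32, 15),
   (33, 28), (34, 24), (36, 29), (38, 25), (39, 13), (42, 4), (42, 8), (43, 30), (44, 4), (44, 8),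
   (44, 19), (44, 26), (44, 27), (46, 34), (46, 44), (47, 10), (47, 28), (49, 47), (50, 15),
   (50, 32), (50, 35), (53, 50), (62, 56), (62, 58), (66, 12), (66, 42), (69, 38), (70, 65),
   (71, 12), (71, 14), (73, 24), (74, 65), (76, 65), (77, 40), (77, 65), (80, 41), (80, 44),
   (82, 29), (83, 32), (84, 48), (85, 65), (87, 76), (90, 89), (91, 62), (93, 15), (93, 32),
   (93, 40), (95, 74), (96, 41), (100, 11), (100, 59), (100, 65), (101, 65), (102, 65), (88, 81),
   (107, 70), (107, 74), (107, 96), (109, 7), (118, 65), (119, 7), (121, 0), (124, 65), (131, 41),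
   (134, 65), (135, 65)]

/-- A Gröbner basis of the flag variety ideal. -/
def flagGroebnerBasis : List (MarkedPoly (Fin 30)) :=
  criticalPairs.foldl (adjoinSPolynomial (weightOf flagRanks)) flagQuadrics

/-- The marked monomials of the Gröbner basis, the oldest first. -/
def flagLeadingMonomials : List (List (Fin 30)) :=
  [[24, 27], [24, 26], [23, 26], [19, 27], [14, 26], [21, 28], [21, 27], [18, 27], [14, 25],
   [21, 26], [19, 25], [12, 26], [15, 27], [10, 26], [6, 27], [4, 25], [19, 23], [11, 24],
   [20, 21], [14, 21], [19, 21], [13, 21], [17, 21], [11, 21], [6, 23], [4, 21], [14, 19],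
   [14, 18], [12, 19], [15, 20], [10, 19], [6, 20], [4, 18], [11, 12], [6, 14], [4, 12], [11, 20],
   [10, 20], [8, 21], [10, 17], [5, 20], [3, 17], [5, 14], [4, 10], [0, 14], [11, 19], [14, 15],
   [9, 19], [11, 15], [5, 19], [4, 15], [6, 11], [2, 11], [4, 6], [0, 11], [11, 18], [10, 18],
   [6, 21], [10, 15], [5, 18], [0, 21], [6, 10], [2, 10], [3, 6], [0, 10], [0, 9], [14, 22, 27],
   [17, 24, 25], [20, 24, 25], [8, 24, 25], [9, 24, 28], [12, 22, 27], [11, 23, 25], [6, 17, 25],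
   [9, 20, 24], [9, 14, 24], [9, 17, 24], [9, 20, 26], [12, 17, 27], [4, 9, 24], [14, 17, 24],
   [6, 24, 25], [12, 17, 20], [6, 17, 18], [3, 15, 28], [8, 9, 24], [12, 14, 17], [5, 17, 24],
   [4, 5, 24], [11, 17, 25], [8, 11, 25], [8, 10, 25], [4, 9, 20], [4, 5, 28], [0, 12, 27],
   [3, 9, 20], [3, 8, 19], [0, 12, 20], [5, 6, 24], [3, 8, 15], [9, 18, 26], [6, 9, 24],
   [6, 9, 17], [3, 15, 26], [3, 15, 19], [3, 13, 15], [1, 6, 19], [3, 9, 18], [3, 9, 15],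
   [9, 20, 22, 27], [5, 11, 23, 28], [12, 20, 22, 25], [0, 13, 24, 25], [9, 15, 23, 28],
   [9, 12, 17, 28], [12, 17, 17, 25], [0, 13, 18, 23], [0, 13, 15, 23], [5, 9, 17, 28],
   [1, 8, 18, 26], [4, 14, 16, 24], [4, 8, 16, 24], [12, 17, 17, 18], [1, 8, 18, 19],
   [0, 13, 23, 25], [0, 5, 13, 24], [9, 12, 17, 17], [5, 11, 17, 28], [2, 5, 12, 27],
   [3, 8, 25, 26], [3, 8, 18, 26], [3, 8, 20, 26], [2, 14, 16, 24], [4, 8, 16, 19],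
   [9, 12, 15, 28], [5, 9, 15, 28], [1, 6, 18, 26], [1, 6, 6, 24], [1, 6, 6, 17],
   [0, 12, 13, 17, 25], [3, 13, 18, 24, 25], [3, 12, 18, 20, 22], [0, 12, 13, 17, 18],
   [9, 20, 20, 22, 25], [0, 5, 13, 17, 25], [0, 13, 17, 25, 27], [0, 13, 20, 23, 27],
   [3, 8, 9, 22, 25], [4, 8, 16, 20, 26], [0, 12, 13, 15, 25], [0, 5, 13, 15, 25]]

/-- The products of two Plücker variables whose columns are incomparable. -/
def incomparablePairs : List (List (Fin 30)) :=
  (List.finRange 30).flatMap fun i =>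
    ((List.finRange 30).filter fun j => j < i ∧ ¬ ColumnLE (subsets5 i) (subsets5 j) ∧
      ¬ ColumnLE (subsets5 j) (subsets5 i)).map fun j => [j, i]

set_option maxRecDepth 20000 in
theorem flagGroebnerBasis_spec :
    flagGroebnerBasis.reverse.map MarkedPoly.lead = flagLeadingMonomials ∧
    (∀ g ∈ flagGroebnerBasis, g.IsAdmissible flagRanks flagWeights) ∧
    ∃ g ∈ flagGroebnerBasis, g.lead = [4, 12] ∧
      ∀ t ∈ g.tail, weightOf flagWeights t.2 ≠ weightOf flagWeights g.lead := by
  decide +kernel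

set_option maxRecDepth 20000 in
theorem hilbertNumerator_flagLeadingMonomials :
    ∀ a ∈ addCoeffs (hilbertNumerator flagLeadingMonomials)
      ((hilbertNumerator incomparablePairs).map Neg.neg), a = 0 := by
  decide +kernel

theorem subsets5_injective : Function.Injective subsets5 := by decide +kernel

theorem subsets5_nonempty : ∀ i, (subsets5 i).Nonempty := by decide +kernel

theorem subsets5_pluckerIndex :
    ∀ S : Finset (Fin 5), S.Nonempty → S ≠ Finset.univ → subsets5 (pluckerIndex S) = S := by
  decide +kernel

section Vanishing

variable {A : Type*} [CommRing A] (M : Matrix ℕ (Fin 5) A)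

theorem eval_pluckerRelation {J K : Finset (Fin 5)} (h : #K + 2 ≤ #J) :
    (pluckerRelation J K).eval (fun i => topMinor M (subsets5 i)) = 0 := by
  have hJ : #J ≤ 5 := card_finset_fin_le J
  have hterms : (pluckerRelation J K).eval (fun i => topMinor M (subsets5 i)) =
      ∑ x ∈ ((List.finRange 5).filter (· ∈ J \ K)).toFinset,
        (-1) ^ (#{y ∈ J | y < x} + #{y ∈ K | y < x}) *
          topMinor M (J.erase x) * topMinor M (insert x K) := by
    rw [List.sum_toFinset _ ((List.nodup_finRange 5).filter _), pluckerRelation, SparsePoly.eval,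
      List.map_map]
    refine congrArg List.sum (List.map_congr_left fun x hx => ?_)
    have hx : x ∈ J ∧ x ∉ K := by simpa using hx
    have herase := Finset.card_erase_of_mem hx.1
    have hinsert := Finset.card_insert_of_notMem hx.2
    have hJx : subsets5 (pluckerIndex (J.erase x)) = J.erase x :=
      subsets5_pluckerIndex _ (Finset.card_pos.1 (by omega))
        fun huniv => by rw [huniv, Finset.card_fin] at herase; omega
    have hKx : subsets5 (pluckerIndex (insert x K)) = insert x K :=
      subsets5_pluckerIndex _ (Finset.insert_nonempty x K)
        fun huniv => by rw [huniv, Finset.card_fin] at hinsert; omega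
    simp [prod_map_mulMonomial, hJx, hKx, mul_assoc]
  rw [hterms, ← sum_topMinor_erase_mul_topMinor_insert M h]
  congr 1
  ext x
  simp

theorem vanishesAt_of_mem_flagGroebnerBasis [NoZeroDivisors A] [CharZero A] :
    ∀ g ∈ flagGroebnerBasis, g.VanishesAt fun i => topMinor M (subsets5 i) := by
  refine List.foldlRecOn criticalPairs _ (motive := fun G : List (MarkedPoly (Fin 30)) =>
    ∀ g ∈ G, g.VanishesAt fun i => topMinor M (subsets5 i)) ?_
    fun G hG ij _ => vanishesAt_of_mem_adjoinSPolynomial hG ij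
  refine List.foldlRecOn pluckerRelations.reverse _ (motive := fun G : List (MarkedPoly (Fin 30)) =>
    ∀ g ∈ G, g.VanishesAt fun i => topMinor M (subsets5 i)) (by simp)
    fun G hG p hp => vanishesAt_of_mem_adjoin hG ?_
  simp only [pluckerRelations, List.mem_reverse, List.mem_flatMap, List.mem_map, List.mem_filter,
    decide_eq_true_eq] at hp
  obtain ⟨J, -, K, ⟨-, h⟩, rfl⟩ := hp
  exact eval_pluckerRelation M h

end Vanishing

theorem columnLE_of_mem_standardExponents {u : Fin 30 →₀ ℕ}
    (hu : u ∈ standardExponents incomparablePairs) {i j : Fin 30} (hi : i ∈ u.support)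
    (hj : j ∈ u.support) :
    ColumnLE (subsets5 i) (subsets5 j) ∨ ColumnLE (subsets5 j) (subsets5 i) := by
  wlog hlt : j < i generalizing i j
  · rcases eq_or_lt_of_not_gt hlt with rfl | hgt
    · exact Or.inl fun _ => le_rfl
    · exact (this hj hi hgt).symm
  by_contra! h
  have hmem : [j, i] ∈ incomparablePairs :=
    List.mem_flatMap.2 ⟨i, List.mem_finRange i, List.mem_map.2
      ⟨j, List.mem_filter.2 ⟨List.mem_finRange j, decide_eq_true ⟨hlt, h⟩⟩, rfl⟩⟩
  refine hu [j, i] hmem (exponent_le_iff.2 fun x => ?_)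
  have hcount := List.nodup_iff_count_le_one.1 (by simpa using hlt.ne : [j, i].Nodup) x
  by_cases hx : x ∈ [j, i]
  · refine hcount.trans (Nat.one_le_iff_ne_zero.2 (Finsupp.mem_support_iff.1 ?_))
    rcases List.mem_pair.1 hx with rfl | rfl <;> assumption
  · rw [List.count_eq_zero_of_not_mem hx]
    exact Nat.zero_le _

theorem I5_eq_ker : I5 = RingHom.ker
    (aeval (R := ℚ) fun i => topMinor (genericMatrix 4 5) (subsets5 i)) := by
  simp only [I5, phi5, pluckerMinor_eq_topMinor]
  rfl

theorem isRewritingSystem_flagGroebnerBasis :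
    IsRewritingSystem flagRanks flagWeights I5
      (MarkedPoly.rule ℚ '' {g | g ∈ flagGroebnerBasis}) := by
  rw [I5_eq_ker]
  exact isRewritingSystem_rule (vanishesAt_of_mem_flagGroebnerBasis _) flagGroebnerBasis_spec.2.1

theorem irreducibleExponents_flagGroebnerBasis :
    irreducibleExponents (MarkedPoly.rule ℚ '' {g | g ∈ flagGroebnerBasis}) =
      standardExponents flagLeadingMonomials := by
  rw [irreducibleExponents_rule, ← flagGroebnerBasis_spec.1]
  simp [standardExponents]

theorem disjoint_I5_restrictSupport_standardExponents :
    Disjoint (I5.restrictScalars ℚ) (restrictSupport ℚ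
      (irreducibleExponents (MarkedPoly.rule ℚ '' {g | g ∈ flagGroebnerBasis}))) := by
  have hchain : Disjoint (I5.restrictScalars ℚ)
      (restrictSupport ℚ (standardExponents incomparablePairs)) :=
    disjoint_ker_aeval_pluckerMinor subsets5_card subsets5_nonempty subsets5_injective
      fun u hu i hi j hj => columnLE_of_mem_standardExponents hu hi hj
  refine isRewritingSystem_flagGroebnerBasis.disjoint_restrictSupport hchain fun d => ?_
  rw [irreducibleExponents_flagGroebnerBasis]
  exact (ncard_standardExponents_eq hilbertNumerator_flagLeadingMonomials d).le

theorem initialIdeal_I5 : initialIdeal (fun i => (flagWeights i : ℝ)) I5 =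
    Ideal.span (lowestForm flagWeights '' (MarkedPoly.rule ℚ '' {g | g ∈ flagGroebnerBasis})) :=
  isRewritingSystem_flagGroebnerBasis.initialIdeal_eq_span
    disjoint_I5_restrictSupport_standardExponents

theorem X_mul_X_mem_initialIdeal_I5 :
    X 4 * X 12 ∈ initialIdeal (fun i => (flagWeights i : ℝ)) I5 := by
  obtain ⟨g, hg, hlead, htail⟩ := flagGroebnerBasis_spec.2.2
  rw [initialIdeal_I5]
  refine Ideal.subset_span ⟨g.rule ℚ, ⟨g, hg, rfl⟩, ?_⟩
  simp [MarkedPoly.lowestForm_rule_of_forall_ne htail, hlead]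

end FlagVariety

/-- For the weight vector associated to the string cone of the reduced expression
`s₁s₂s₁s₃s₄s₃s₂s₃s₁s₂` for `Flag₅`, the initial ideal `init_w(I₅)` is generated by
binomials but is not prime. -/
theorem string3_flag5_initial_ideal_binomial_not_prime :
    IsBinomialIdeal (initialIdeal ![0, 512, 384, 74, 0, 256, 72, 768, 584, 456, 0, 64, 320,
        832, 58, 56, 568, 440, 111, 48, 304, 108, 816, 620, 492, 0, 32, 96, 352, 864] I5) ∧
    ¬ (initialIdeal ![0, 512, 384, 74, 0, 256, 72, 768, 584, 456, 0, 64, 320, 832, 58, 56,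
        568, 440, 111, 48, 304, 108, 816, 620, 492, 0, 32, 96, 352, 864] I5).IsPrime := by
  have hw : (![0, 512, 384, 74, 0, 256, 72, 768, 584, 456, 0, 64, 320, 832, 58, 56, 568, 440, 111,
      48, 304, 108, 816, 620, 492, 0, 32, 96, 352, 864] : Fin 30 → ℝ) =
      fun i => (flagWeights i : ℝ) := by
    ext i
    fin_cases i <;> simp [flagWeights]
  rw [hw]
  constructor
  · rw [initialIdeal_I5]
    exact isBinomialIdeal_span_lowestForm_rule flagGroebnerBasis_spec.2.1
  · refine not_isPrime_of_le_pow_idealOfVars ?_ X_mul_X_mem_initialIdeal_I5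
    rw [initialIdeal_I5]
    exact span_lowestForm_rule_le flagGroebnerBasis_spec.2.1
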